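/- arXiv:0804.0288 — 2 statements merged into one kernel-verified Lean document; each statement's English description precedes it below -/
import Mathlib

section
/- There exists a sequence of maps μ_n : (ℝ² ∖ {0}) → (SL(2,ℤ) → ℝ), n ∈ ℕ, such that: (i) for every n and every nonzero v ∈ ℝ², μ_n(v) is a probability density on SL(2,ℤ); (ii) each μ_n is continuous as a map into ℓ¹(SL(2,ℤ)), i.e., v ↦ μ_n(v) is continuous with respect to the norm ‖·‖₁; (iii) μ_n(c·v) = μ_n(v) for every real c ≠ 0 and every nonzero v ∈ ℝ² (so μ_n descends to the real projective line); and (iv) for every g ∈ SL(2,ℤ), sup over nonzero v ∈ ℝ² of ‖μ_n(g·v) − g·μ_n(v)‖₁ tends to 0 as n → ∞, where g·v denotes matrix–vector multiplication. (This expresses amenability of the action of SL(2,ℤ) on the real projective line.) -/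
noncomputable def qrow (L p q v0 v1 : ℝ) : ℝ := p^2+q^2+L^2*((p*v0+q*v1)^2/(v0^2+v1^2))

lemma qrow_nonneg (L p q v0 v1 : ℝ) : 0 ≤ qrow L p q v0 v1 := by
  unfold qrow; positivity

lemma qrow_ge (L p q v0 v1 : ℝ) : p^2+q^2 ≤ qrow L p q v0 v1 := by
  unfold qrow
  have : 0 ≤ L^2*((p*v0+q*v1)^2/(v0^2+v1^2)) := by positivity
  linarith

lemma cs (a b x y : ℝ) : (a*x+b*y)^2 ≤ (a^2+b^2)*(x^2+y^2) := by
  nlinarith [sq_nonneg (a*y-b*x)]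

lemma cauchy4 (a b c d x y : ℝ) :
    (a*x+b*y)^2+(c*x+d*y)^2 ≤ (a^2+b^2+c^2+d^2)*(x^2+y^2) := by
  have h1 := cs a b x y
  have h2 := cs c d x y
  linarith


lemma h3aux (x y L : ℝ) (hL : 1 ≤ L) : (x^2+2*x*y)*L ≤ 2*(x^2+y^2+L^2*x^2) := by
  have h1 : L*x^2 ≤ L^2*x^2 := by
    apply mul_le_mul_of_nonneg_right _ (sq_nonneg x)
    nlinarith
  nlinarith [sq_nonneg (L*x-y), sq_nonneg x, sq_nonneg y]

lemma row_compare (p q a b c d v0 v1 L w0 w1 S W N : ℝ) (hdet : a*d-b*c=1)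
    (hw0 : w0 = a*v0+b*v1) (hw1 : w1 = c*v0+d*v1) (hS : S = v0^2+v1^2) (hW : W = w0^2+w1^2)
    (hN : N = a^2+b^2+c^2+d^2) (hSp : 0 < S) (hL : 1 ≤ L) :
    |qrow (L*(S/W)) (p*a+q*c) (p*b+q*d) v0 v1 - (S/W) * qrow L p q w0 w1|
      ≤ 2*N^2/L * ((S/W) * qrow L p q w0 w1) := by
  have hv0 : v0 = d*w0 - b*w1 := by subst hw0 hw1; linear_combination (-v0)*hdet
  have hv1 : v1 = -c*w0+a*w1 := by subst hw0 hw1; linear_combination (-v1)*hdet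
  have hSN : S ≤ N*W := by
    have := cauchy4 d (-b) (-c) a w0 w1
    rw [hS, hN, hW, hv0, hv1]; nlinarith
  have hWN : W ≤ N*S := by
    have := cauchy4 a b c d v0 v1
    rw [hS, hN, hW, hw0, hw1]; nlinarith
  have hN0 : 0 ≤ N := by rw [hN]; positivity
  have hW0 : 0 ≤ W := by rw [hW]; positivity
  have hWp : 0 < W := by
    rcases hW0.lt_or_eq with h | h
    · exact h
    · rw [← h] at hSN; linarith
  have hu0 : -w1*a+w0*c = -v1 := by rw [hv1]; ring
  have hu1 : -w1*b+w0*d = v0 := by rw [hv0]; ring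
  set α := p*w0+q*w1 with hα
  set β := -p*w1+q*w0 with hβ
  set m0 := w0*a+w1*c with hm0
  set m1 := w0*b+w1*d with hm1
  have hM : m0^2+m1^2 ≤ N*W := by
    have := cauchy4 a c b d w0 w1
    rw [hN, hW]; nlinarith
  have hB : |m0*(-v1)+m1*v0| ≤ N*W := by
    have h1 := cs m0 m1 (-v1) v0
    apply abs_le_of_sq_le_sq _ (by positivity)
    have : (m0^2+m1^2)*((-v1)^2+v0^2) ≤ (N*W)*(N*W) := by
      apply mul_le_mul hM _ (by positivity) (by positivity)
      rw [hS] at hSN; linarith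
    linarith
  have hr : (p^2+q^2)*W = α^2+β^2 := by rw [hα, hβ, hW]; ring
  have hrg : W^2*((p*a+q*c)^2+(p*b+q*d)^2) = (α*m0+β*(-v1))^2+(α*m1+β*v0)^2 := by
    rw [← hu0, ← hu1, hα, hβ, hm0, hm1, hW]; ring
  have hdot : (p*a+q*c)*v0+(p*b+q*d)*v1 = α := by rw [hα, hw0, hw1]; ring
  have e2 : (S/W) * qrow L p q w0 w1 = (S*(α^2+β^2+L^2*α^2))/W^2 := by
    unfold qrow
    rw [← hW, ← hα]
    field_simp
    linear_combination hr
  have e1 : qrow (L*(S/W)) (p*a+q*c) (p*b+q*d) v0 v1 =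
     ((α*m0+β*(-v1))^2+(α*m1+β*v0)^2 + L^2*S*α^2)/W^2 := by
    unfold qrow
    rw [hdot, ← hS]
    field_simp
    linear_combination hrg
  rw [e1, e2, ← sub_div, abs_div, abs_of_pos (show 0 < W^2 by positivity), ← mul_div_assoc]
  apply div_le_div_of_nonneg_right _ (by positivity)
  have e3 : (α*m0+β*(-v1))^2+(α*m1+β*v0)^2 + L^2*S*α^2 - S*(α^2+β^2+L^2*α^2) =
      α^2*(m0^2+m1^2-S) + 2*(α*β)*(m0*(-v1)+m1*v0) := by rw [hS]; ring
  rw [e3]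
  have h1 : |m0^2+m1^2-S| ≤ N*W := by
    have h0 : 0 ≤ m0^2+m1^2 := by positivity
    rw [abs_le]; constructor <;> linarith
  have h2 : |α^2*(m0^2+m1^2-S) + 2*(α*β)*(m0*(-v1)+m1*v0)| ≤ α^2*(N*W)+2*|α*β| *(N*W) := by
    refine (abs_add_le _ _).trans ?_
    rw [abs_mul, abs_mul, abs_mul 2, abs_of_nonneg (sq_nonneg α), abs_of_pos (two_pos : (0:ℝ) < 2)]
    gcongr
  refine h2.trans ?_
  have hLp : 0 < L := by linarith
  rw [div_mul_eq_mul_div, le_div_iff₀ hLp]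
  have h3 : (α^2+2*|α*β|)*L ≤ 2*(α^2+β^2+L^2*α^2) := by
    have := h3aux |α| |β| L hL
    rwa [sq_abs, sq_abs, mul_assoc, ← abs_mul] at this
  calc (α^2*(N*W)+2*|α*β| *(N*W))*L = ((α^2+2*|α*β|)*L)*(N*W) := by ring
    _ ≤ (2*(α^2+β^2+L^2*α^2))*(N*(N*S)) := by gcongr
    _ = _ := by ring

lemma row_shift (L p q v0 v1 ρ δ : ℝ) (h : |ρ| ≤ δ) :
    qrow (L*Real.exp ρ) p q v0 v1 ≤ Real.exp (2*δ) * qrow L p q v0 v1 := by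
  unfold qrow
  have hδ : 0 ≤ δ := (abs_nonneg _).trans h
  have h1 : 1 ≤ Real.exp (2*δ) := Real.one_le_exp (by linarith)
  have h2 : Real.exp ρ ^2 ≤ Real.exp (2*δ) := by
    rw [← Real.exp_nat_mul]; apply Real.exp_le_exp.2; push_cast; linarith [le_abs_self ρ]
  rw [mul_add, mul_pow]
  apply add_le_add
  · nlinarith [sq_nonneg p, sq_nonneg q]
  · have h0 : 0 ≤ L^2*((p*v0+q*v1)^2/(v0^2+v1^2)) := by positivity
    nlinarith

lemma row_cont (L p q v0 v1 u0 u1 : ℝ) :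
    qrow L p q v0 v1 ≤ (1+L^2*(|v0^2/(v0^2+v1^2)-u0^2/(u0^2+u1^2)|
      +|v0*v1/(v0^2+v1^2)-u0*u1/(u0^2+u1^2)|+|v1^2/(v0^2+v1^2)-u1^2/(u0^2+u1^2)|)) * qrow L p q u0 u1 := by
  have h1 := qrow_ge L p q u0 u1
  have h0 := qrow_nonneg L p q u0 u1
  set A := v0^2/(v0^2+v1^2)-u0^2/(u0^2+u1^2) with hA
  set B := v0*v1/(v0^2+v1^2)-u0*u1/(u0^2+u1^2) with hB
  set C := v1^2/(v0^2+v1^2)-u1^2/(u0^2+u1^2) with hC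
  have e : qrow L p q v0 v1 - qrow L p q u0 u1 = L^2*(p^2*A+2*p*q*B+q^2*C) := by
    rw [hA, hB, hC]; unfold qrow; ring
  have hpq : |2*p*q| ≤ p^2+q^2 := by
    rw [abs_le]; constructor <;> nlinarith [sq_nonneg (p+q), sq_nonneg (p-q)]
  have b : p^2*A+2*p*q*B+q^2*C ≤ (|A|+|B|+|C|)*(p^2+q^2) := by
    have h2 : p^2*A ≤ p^2*|A| := by gcongr; exact le_abs_self A
    have h3 : q^2*C ≤ q^2*|C| := by gcongr; exact le_abs_self C
    have h4 : 2*p*q*B ≤ (p^2+q^2)*|B| := (le_abs_self _).trans (by rw [abs_mul]; gcongr)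
    nlinarith [abs_nonneg A, abs_nonneg C, sq_nonneg p, sq_nonneg q]
  have : L^2*(p^2*A+2*p*q*B+q^2*C) ≤ L^2*((|A|+|B|+|C|)*qrow L p q u0 u1) := by
    gcongr; exact b.trans (by gcongr)
  linarith

lemma row_scale (L p q v0 v1 c : ℝ) (hc : c ≠ 0) :
    qrow L p q (c*v0) (c*v1) = qrow L p q v0 v1 := by
  unfold qrow
  have e1 : (p*(c*v0)+q*(c*v1))^2 = c^2*(p*v0+q*v1)^2 := by ring
  have e2 : (c*v0)^2+(c*v1)^2 = c^2*(v0^2+v1^2) := by ring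
  rw [e1, e2, mul_div_mul_left _ _ (by positivity)]

abbrev SLZ := Matrix.SpecialLinearGroup (Fin 2) ℤ

noncomputable def QQ (L : ℝ) (v : Fin 2 → ℝ) (A : SLZ) : ℝ :=
  qrow L (A.1 0 0) (A.1 0 1) (v 0) (v 1) + qrow L (A.1 1 0) (A.1 1 1) (v 0) (v 1)

lemma sl_det (A : SLZ) : A.1 0 0 * A.1 1 1 - A.1 0 1 * A.1 1 0 = 1 := by
  have := A.2
  rwa [Matrix.det_fin_two] at this

lemma QQ_ge (L : ℝ) (v : Fin 2 → ℝ) (A : SLZ) :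
    (A.1 0 0 : ℝ)^2 + (A.1 0 1 : ℝ)^2 + (A.1 1 0 : ℝ)^2 + (A.1 1 1 : ℝ)^2 ≤ QQ L v A := by
  unfold QQ
  have h1 := qrow_ge L (A.1 0 0) (A.1 0 1) (v 0) (v 1)
  have h2 := qrow_ge L (A.1 1 0) (A.1 1 1) (v 0) (v 1)
  linarith

lemma QQ_ge_one (L : ℝ) (v : Fin 2 → ℝ) (A : SLZ) : 1 ≤ QQ L v A := by
  have h := QQ_ge L v A
  have h1 : (A.1 0 0 : ℝ) * A.1 1 1 - A.1 0 1 * A.1 1 0 = 1 := by exact_mod_cast sl_det A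
  nlinarith [sq_nonneg ((A.1 0 0 : ℝ) - A.1 1 1), sq_nonneg ((A.1 0 1 : ℝ) + A.1 1 0)]

lemma QQ_pos (L : ℝ) (v : Fin 2 → ℝ) (A : SLZ) : 0 < QQ L v A :=
  lt_of_lt_of_le one_pos (QQ_ge_one L v A)

noncomputable def FF (L : ℝ) (v : Fin 2 → ℝ) (g h : SLZ) : ℝ := 1 / (QQ L v (h⁻¹ * g))^4

lemma FF_pos (L : ℝ) (v : Fin 2 → ℝ) (g h : SLZ) : 0 < FF L v g h := by
  have := QQ_pos L v (h⁻¹ * g)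
  unfold FF; positivity

lemma summable_one_add_sq : Summable (fun k : ℤ => 1 / (1 + (k:ℝ)^2)) := by
  have h : Summable (fun k : ℤ => 1 / (k:ℝ)^2) := Real.summable_one_div_int_pow.2 (by norm_num)
  refine Summable.of_norm_bounded_eventually h ?_
  have : ∀ᶠ k : ℤ in Filter.cofinite, k ≠ 0 := by
    rw [Filter.eventually_cofinite]; simp
  filter_upwards [this] with k hk
  have hk' : (0:ℝ) < (k:ℝ)^2 := by positivity
  rw [Real.norm_of_nonneg (by positivity)]
  gcongr
  linarith

def ent (A : SLZ) : (ℤ × ℤ) × (ℤ × ℤ) := ((A.1 0 0, A.1 0 1), (A.1 1 0, A.1 1 1))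

lemma ent_inj : Function.Injective ent := by
  intro A B h
  simp only [ent, Prod.mk.injEq] at h
  obtain ⟨⟨h1, h2⟩, h3, h4⟩ := h
  ext i j
  fin_cases i <;> fin_cases j <;> assumption

lemma summable_QQ (L : ℝ) (v : Fin 2 → ℝ) : Summable (fun A : SLZ => 1 / (QQ L v A)^4) := by
  have h := summable_one_add_sq
  have h2 := h.mul_of_nonneg h (fun k => by positivity) (fun k => by positivity)
  have h4 := h2.mul_of_nonneg h2 (fun k => by positivity) (fun k => by positivity)
  have h5 := (h4.comp_injective ent_inj).mul_left 16
  refine Summable.of_nonneg_of_le (fun A => ?_) (fun A => ?_) h5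
  · have := QQ_pos L v A
    positivity
  · have h1 := QQ_ge_one L v A
    have h3 := QQ_ge L v A
    simp only [Function.comp, ent]
    set a := (A.1 0 0 : ℝ)
    set b := (A.1 0 1 : ℝ)
    set c := (A.1 1 0 : ℝ)
    set d := (A.1 1 1 : ℝ)
    set Q := QQ L v A
    have ha : 1 + a^2 ≤ 2*Q := by nlinarith [sq_nonneg b, sq_nonneg c, sq_nonneg d]
    have hb : 1 + b^2 ≤ 2*Q := by nlinarith [sq_nonneg a, sq_nonneg c, sq_nonneg d]
    have hc : 1 + c^2 ≤ 2*Q := by nlinarith [sq_nonneg b, sq_nonneg a, sq_nonneg d]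
    have hd : 1 + d^2 ≤ 2*Q := by nlinarith [sq_nonneg b, sq_nonneg c, sq_nonneg a]
    have hp : (1+a^2)*(1+b^2)*((1+c^2)*(1+d^2)) ≤ (2*Q)*(2*Q)*((2*Q)*(2*Q)) := by
      gcongr
    have e : 16*(1/(1+a^2)*(1/(1+b^2))*(1/(1+c^2)*(1/(1+d^2)))) =
      16/((1+a^2)*(1+b^2)*((1+c^2)*(1+d^2))) := by field_simp
    rw [e, div_le_div_iff₀ (by positivity) (by positivity)]
    nlinarith

lemma summable_FF (L : ℝ) (v : Fin 2 → ℝ) (g : SLZ) : Summable (FF L v g) := by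
  have h := summable_QQ L v
  have := h.comp_injective ((Equiv.inv SLZ).trans (Equiv.mulRight g)).injective
  exact this

noncomputable def ZZ (L : ℝ) (v : Fin 2 → ℝ) (g : SLZ) : ℝ := ∑' h, FF L v g h

lemma ZZ_pos (L : ℝ) (v : Fin 2 → ℝ) (g : SLZ) : 0 < ZZ L v g :=
  (summable_FF L v g).tsum_pos (fun h => (FF_pos L v g h).le) 1 (FF_pos L v g 1)

lemma ZZ_one (L : ℝ) (v : Fin 2 → ℝ) (g : SLZ) : ZZ L v g = ZZ L v 1 := by
  unfold ZZ
  rw [← (Equiv.mulLeft g).tsum_eq (FF L v g)]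
  congr 1; ext h
  simp [FF, mul_assoc]

abbrev E1 := lp (fun _ : SLZ => ℝ) 1

lemma norm_E1 (f : E1) : ‖f‖ = ∑' h, |f h| := by
  rw [lp.norm_eq_tsum_rpow (by simp)]
  simp

lemma summable_E1 (f : E1) : Summable (fun h => |f h|) := by
  have := (memℓp_gen_iff (p := 1) (by simp)).1 (lp.memℓp f)
  simpa using this

noncomputable def PP (L : ℝ) (v : Fin 2 → ℝ) (g : SLZ) : E1 :=
  ⟨fun h => FF L v g h / ZZ L v g, by
    apply memℓp_gen
    have := ((summable_FF L v g).div_const (ZZ L v g)).abs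
    simpa only [Real.norm_eq_abs, ENNReal.toReal_one, Real.rpow_one] using this⟩

lemma PP_apply (L : ℝ) (v : Fin 2 → ℝ) (g h : SLZ) : PP L v g h = FF L v g h / ZZ L v g := rfl

lemma PP_pos (L : ℝ) (v : Fin 2 → ℝ) (g h : SLZ) : 0 < PP L v g h :=
  div_pos (FF_pos L v g h) (ZZ_pos L v g)

lemma PP_hasSum (L : ℝ) (v : Fin 2 → ℝ) (g : SLZ) : HasSum (PP L v g) 1 := by
  have := (summable_FF L v g).hasSum.div_const (ZZ L v g)
  rw [← ZZ, div_self (ZZ_pos L v g).ne'] at this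
  exact this

lemma PP_norm (L : ℝ) (v : Fin 2 → ℝ) (g : SLZ) : ‖PP L v g‖ = 1 := by
  rw [norm_E1, ← (PP_hasSum L v g).tsum_eq]
  congr 1; ext h; exact abs_of_pos (PP_pos L v g h)

lemma PP_translate (L : ℝ) (v : Fin 2 → ℝ) (g h : SLZ) : PP L v g h = PP L v 1 (g⁻¹ * h) := by
  rw [PP_apply, PP_apply, ZZ_one L v g]
  simp [FF]

lemma PP_half (L L' : ℝ) (v v' : Fin 2 → ℝ) (g g' : SLZ) (K c : ℝ) (hK : 1 ≤ K)
    (h1 : ∀ h, FF L v g h ≤ K * (c * FF L' v' g' h)) (h2 : ∀ h, c * FF L' v' g' h ≤ K * FF L v g h)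
    (h : SLZ) : PP L v g h ≤ K^2 * PP L' v' g' h := by
  have s : c * ZZ L' v' g' ≤ K * ZZ L v g := by
    unfold ZZ
    rw [← tsum_mul_left, ← tsum_mul_left]
    exact ((summable_FF L' v' g').mul_left c).tsum_le_tsum h2 ((summable_FF L v g).mul_left K)
  have z1 := ZZ_pos L v g
  have z2 := ZZ_pos L' v' g'
  rw [PP_apply, PP_apply, ← mul_div_assoc, div_le_div_iff₀ z1 z2]
  have f := FF_pos L' v' g' h
  calc FF L v g h * ZZ L' v' g' ≤ (K * (c * FF L' v' g' h)) * ZZ L' v' g' := by gcongr; exact h1 h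
    _ = K * FF L' v' g' h * (c * ZZ L' v' g') := by ring
    _ ≤ K * FF L' v' g' h * (K * ZZ L v g) := by gcongr
    _ = _ := by ring

lemma PP_close (L L' : ℝ) (v v' : Fin 2 → ℝ) (g g' : SLZ) (κ c : ℝ) (hκ : 1 ≤ κ) (hc : 0 < c)
    (h1 : ∀ h : SLZ, QQ L v (h⁻¹ * g) ≤ κ * (c * QQ L' v' (h⁻¹ * g')))
    (h2 : ∀ h : SLZ, c * QQ L' v' (h⁻¹ * g') ≤ κ * QQ L v (h⁻¹ * g)) :
    ‖PP L v g - PP L' v' g'‖ ≤ 2 * (κ^8 - 1) := by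
  have hK : 1 ≤ κ^4 := one_le_pow₀ hκ
  have hc' : 0 < c^4 := by positivity
  have hκ0 : 0 < κ := by linarith
  have A1 : ∀ h, c^4 * FF L v g h ≤ κ^4 * FF L' v' g' h := by
    intro h
    have q1 := QQ_pos L v (h⁻¹ * g)
    have q2 := QQ_pos L' v' (h⁻¹ * g')
    unfold FF
    rw [mul_one_div, mul_one_div, div_le_div_iff₀ (by positivity) (by positivity), ← mul_pow, ← mul_pow]
    exact pow_le_pow_left₀ (by positivity) (h2 h) 4
  have A2 : ∀ h, FF L' v' g' h ≤ κ^4 * (c^4 * FF L v g h) := by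
    intro h
    have q1 := QQ_pos L v (h⁻¹ * g)
    have q2 := QQ_pos L' v' (h⁻¹ * g')
    unfold FF
    rw [mul_one_div, mul_div_assoc', div_le_div_iff₀ (by positivity) (by positivity), one_mul,
      ← mul_pow, ← mul_pow, mul_assoc]
    exact pow_le_pow_left₀ (by positivity) (h1 h) 4
  have B1 := PP_half L' L v' v g' g (κ^4) (c^4) hK A2 A1
  have B2 := PP_half L L' v v' g g' (κ^4) ((c^4)⁻¹) hK
    (fun h => by
      have := A1 h
      rw [← mul_assoc, mul_comm (κ^4), mul_assoc]
      rwa [le_inv_mul_iff₀ hc'])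
    (fun h => by
      have := A2 h
      rw [inv_mul_le_iff₀ hc']
      linarith)
  rw [← pow_mul] at B1 B2
  norm_num at B1 B2
  have hK8 : 1 ≤ κ^8 := one_le_pow₀ hκ
  have pt : ∀ h, |(PP L v g - PP L' v' g') h| ≤ (κ^8-1) * (PP L v g h + PP L' v' g' h) := by
    intro h
    have p1 := PP_pos L v g h
    have p2 := PP_pos L' v' g' h
    have b1 := B1 h
    have b2 := B2 h
    rw [lp.coeFn_sub, Pi.sub_apply, abs_le]
    constructor <;> nlinarith
  have hs := ((PP_hasSum L v g).add (PP_hasSum L' v' g')).mul_left (κ^8-1)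
  rw [norm_E1]
  have := (summable_E1 (PP L v g - PP L' v' g')).tsum_le_tsum pt hs.summable
  rw [hs.tsum_eq] at this
  linarith

lemma shift_bound {E : Type*} [NormedAddCommGroup E] (a : ℤ → E) (ha : ∀ j, ‖a j‖ ≤ 1) (c : ℤ) (M : ℕ)
    (k : ℤ) : ‖∑ i ∈ Finset.range M, a (c + i + k) - ∑ i ∈ Finset.range M, a (c + i)‖ ≤ 2 * |(k:ℝ)| := by
  have step : ∀ k : ℤ, ‖∑ i ∈ Finset.range M, a (c + i + (k+1)) - ∑ i ∈ Finset.range M, a (c + i + k)‖ ≤ 2 := by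
    intro k
    have : ∑ i ∈ Finset.range M, a (c + i + (k+1)) - ∑ i ∈ Finset.range M, a (c + i + k)
        = a (c + M + k) - a (c + (0:ℕ) + k) := by
      rw [← Finset.sum_range_sub (fun i : ℕ => a (c + i + k)), ← Finset.sum_sub_distrib]
      apply Finset.sum_congr rfl
      intro i _
      congr 2
      push_cast; ring
    rw [this]
    refine (norm_sub_le _ _).trans ?_
    linarith [ha (c + M + k), ha (c + (0:ℕ) + k)]
  induction k using Int.induction_on with
  | zero => simp
  | succ k ih =>
    have h := norm_add_le_of_le (step k) ih
    rw [sub_add_sub_cancel] at h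
    have e : |(((k:ℤ)+1 : ℤ) : ℝ)| = |((k:ℤ):ℝ)| + 1 := by
      push_cast
      rw [abs_of_nonneg (by positivity), abs_of_nonneg (by positivity)]
    rw [e]; linarith
  | pred k ih =>
    have h1 := step (-k-1)
    rw [norm_sub_rev] at h1
    rw [sub_add_cancel] at h1
    have h := norm_add_le_of_le h1 ih
    rw [sub_add_sub_cancel] at h
    have e : |((-(k:ℤ)-1 : ℤ) : ℝ)| = |((-(k:ℤ) : ℤ):ℝ)| + 1 := by
      push_cast
      rw [abs_neg, abs_of_nonneg (show (0:ℝ) ≤ k by positivity), abs_of_nonpos (by linarith [show (0:ℝ) ≤ k by positivity])]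
      ring
    rw [e]; linarith

noncomputable def LL (n : ℕ) (j : ℤ) : ℝ := Real.exp (j / (n+1 : ℝ))

noncomputable def AV (n : ℕ) (v : Fin 2 → ℝ) (g : SLZ) : E1 :=
  (((n+1)^2 : ℕ) : ℝ)⁻¹ • ∑ i ∈ Finset.range ((n+1)^2), PP (LL n (((n+1)^2 : ℕ) + i)) v g

lemma AV_apply (n : ℕ) (v : Fin 2 → ℝ) (g h : SLZ) : AV n v g h =
    (((n+1)^2 : ℕ) : ℝ)⁻¹ * ∑ i ∈ Finset.range ((n+1)^2), PP (LL n (((n+1)^2 : ℕ) + i)) v g h := by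
  unfold AV
  rw [lp.coeFn_smul, Pi.smul_apply, lp.coeFn_sum, Finset.sum_apply, smul_eq_mul]

lemma AV_translate (n : ℕ) (v : Fin 2 → ℝ) (g h : SLZ) : AV n v g h = AV n v 1 (g⁻¹ * h) := by
  rw [AV_apply, AV_apply]
  simp_rw [PP_translate _ v g h]

lemma AV_nonneg (n : ℕ) (v : Fin 2 → ℝ) (g h : SLZ) : 0 ≤ AV n v g h := by
  rw [AV_apply]
  have := fun i : ℕ => (PP_pos (LL n (((n+1)^2 : ℕ) + i)) v g h).le
  apply mul_nonneg (by positivity) (Finset.sum_nonneg fun i _ => this i)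

lemma AV_hasSum (n : ℕ) (v : Fin 2 → ℝ) (g : SLZ) : HasSum (AV n v g) 1 := by
  have h := (hasSum_sum (s := Finset.range ((n+1)^2))
    (fun i _ => PP_hasSum (LL n (((n+1)^2 : ℕ) + i)) v g)).mul_left ((((n+1)^2 : ℕ) : ℝ)⁻¹)
  have e : (((n+1)^2 : ℕ) : ℝ)⁻¹ * ∑ i ∈ Finset.range ((n+1)^2), (1:ℝ) = 1 := by
    rw [Finset.sum_const, Finset.card_range, nsmul_eq_mul, mul_one, inv_mul_cancel₀]
    positivity
  rw [e] at h
  rw [show (AV n v g : SLZ → ℝ) = _ from funext (AV_apply n v g)]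
  exact h

lemma AV_scale (n : ℕ) (v : Fin 2 → ℝ) (g h : SLZ) (c : ℝ) (hc : c ≠ 0) : AV n (c • v) g h = AV n v g h := by
  have hQ : ∀ L A, QQ L (c • v) A = QQ L v A := by
    intro L A
    simp [QQ, row_scale _ _ _ _ _ c hc]
  simp only [AV_apply, PP_apply, ZZ, FF, hQ]

noncomputable def dist3 (v u : Fin 2 → ℝ) : ℝ := |v 0^2/(v 0^2+v 1^2)-u 0^2/(u 0^2+u 1^2)|
      +|v 0*v 1/(v 0^2+v 1^2)-u 0*u 1/(u 0^2+u 1^2)|+|v 1^2/(v 0^2+v 1^2)-u 1^2/(u 0^2+u 1^2)|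

lemma dist3_comm (v u : Fin 2 → ℝ) : dist3 v u = dist3 u v := by
  unfold dist3
  rw [abs_sub_comm, abs_sub_comm (v 0*v 1/_), abs_sub_comm (v 1^2/_)]

lemma PP_cont_bound (L : ℝ) (v u : Fin 2 → ℝ) (g : SLZ) :
    ‖PP L v g - PP L u g‖ ≤ 2 * ((1+L^2*dist3 v u)^8 - 1) := by
  have hQ : ∀ v u A, QQ L v A ≤ (1+L^2*dist3 v u) * QQ L u A := by
    intro v u A
    unfold QQ
    rw [mul_add]
    exact add_le_add (row_cont _ _ _ _ _ _ _) (row_cont _ _ _ _ _ _ _)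
  have hd : 0 ≤ dist3 v u := by unfold dist3; positivity
  apply PP_close L L v u g g (1+L^2*dist3 v u) 1 _ one_pos
  · intro h; rw [one_mul]; exact hQ _ _ _
  · intro h; rw [one_mul, dist3_comm]; exact hQ _ _ _
  · have : 0 ≤ L^2*dist3 v u := by positivity
    linarith

lemma sq_pos_of_ne {v : Fin 2 → ℝ} (hv : v ≠ 0) : 0 < v 0^2+v 1^2 := by
  by_contra hh
  apply hv
  have h0 : v 0 = 0 := by nlinarith [sq_nonneg (v 0), sq_nonneg (v 1)]
  have h1 : v 1 = 0 := by nlinarith [sq_nonneg (v 0), sq_nonneg (v 1)]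
  ext i; fin_cases i <;> simpa

lemma dist3_tendsto (u : Fin 2 → ℝ) (hu : u ≠ 0) :
    Filter.Tendsto (fun v => dist3 v u) (nhds u) (nhds 0) := by
  have h0 : dist3 u u = 0 := by simp [dist3]
  have hp := (sq_pos_of_ne hu).ne'
  have : ContinuousAt (fun v => dist3 v u) u := by
    unfold dist3
    fun_prop (disch := assumption)
  rw [← h0]
  exact this

lemma PP_cont (L : ℝ) (u : Fin 2 → ℝ) (hu : u ≠ 0) (g : SLZ) :
    Filter.Tendsto (fun v => PP L v g) (nhds u) (nhds (PP L u g)) := by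
  rw [tendsto_iff_norm_sub_tendsto_zero]
  refine squeeze_zero (fun v => norm_nonneg _) (fun v => PP_cont_bound L v u g) ?_
  have := ((((dist3_tendsto u hu).const_mul (L^2)).const_add 1).pow 8 |>.sub_const 1).const_mul 2
  simpa using this

lemma AV_cont (n : ℕ) (u : Fin 2 → ℝ) (hu : u ≠ 0) (g : SLZ) :
    Filter.Tendsto (fun v => AV n v g) (nhds u) (nhds (AV n u g)) :=
  (tendsto_finsetSum _ fun _ _ => PP_cont _ u hu g).const_smul _

lemma PP_equiv (L L' : ℝ) (v w : Fin 2 → ℝ) (hv : v ≠ 0) (g : SLZ) (N ρ δ : ℝ)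
    (hw0 : w 0 = g.1 0 0 * v 0 + g.1 0 1 * v 1) (hw1 : w 1 = g.1 1 0 * v 0 + g.1 1 1 * v 1)
    (hN : N = (g.1 0 0 : ℝ)^2 + (g.1 0 1 : ℝ)^2 + (g.1 1 0 : ℝ)^2 + (g.1 1 1 : ℝ)^2)
    (hL : 1 ≤ L) (hρ : |ρ| ≤ δ) (hw : w ≠ 0) (hLN : 4*N^2 ≤ L)
    (hL' : L' = L * ((v 0^2+v 1^2)/(w 0^2+w 1^2)) * Real.exp ρ) :
    ‖PP L' v g - PP L w 1‖ ≤ 2 * (((1+4*N^2/L)*Real.exp (2*δ))^8 - 1) := by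
  have hS := sq_pos_of_ne hv
  have hW := sq_pos_of_ne hw
  set S := v 0^2+v 1^2 with hSd
  set W := w 0^2+w 1^2 with hWd
  have hLp : 0 < L := by linarith
  have hθ : 0 ≤ 2*N^2/L := by positivity
  have hθ2 : 2*N^2/L ≤ 1/2 := by rw [div_le_iff₀ hLp]; linarith
  have e4 : 4*N^2/L = 2*(2*N^2/L) := by ring
  rw [e4]
  set θ := 2*N^2/L
  have hδ : 0 ≤ δ := (abs_nonneg _).trans hρ
  have he : 1 ≤ Real.exp (2*δ) := Real.one_le_exp (by linarith)
  have hdet : (g.1 0 0 : ℝ) * g.1 1 1 - g.1 0 1 * g.1 1 0 = 1 := by exact_mod_cast sl_det g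
  have key : ∀ p q : ℝ,
      qrow L' (p*g.1 0 0+q*g.1 1 0) (p*g.1 0 1+q*g.1 1 1) (v 0) (v 1)
        ≤ ((1+2*θ)*Real.exp (2*δ)) * ((S/W) * qrow L p q (w 0) (w 1)) ∧
      (S/W) * qrow L p q (w 0) (w 1) ≤ ((1+2*θ)*Real.exp (2*δ)) *
        qrow L' (p*g.1 0 0+q*g.1 1 0) (p*g.1 0 1+q*g.1 1 1) (v 0) (v 1) := by
    intro p q
    have h := row_compare p q _ _ _ _ _ _ L _ _ S W N hdet hw0 hw1 hSd hWd hN hS hL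
    have s1 := row_shift (L*(S/W)) (p*g.1 0 0+q*g.1 1 0) (p*g.1 0 1+q*g.1 1 1) (v 0) (v 1) ρ δ hρ
    have s2 := row_shift L' (p*g.1 0 0+q*g.1 1 0) (p*g.1 0 1+q*g.1 1 1) (v 0) (v 1) (-ρ) δ (by rwa [abs_neg])
    rw [← hL'] at s1
    have e : L' * Real.exp (-ρ) = L*(S/W) := by
      rw [hL', mul_assoc, ← Real.exp_add]; simp
    rw [e] at s2
    have n1 : 0 ≤ (S/W) * qrow L p q (w 0) (w 1) := mul_nonneg (by positivity) (qrow_nonneg _ _ _ _ _)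
    set X := qrow L' (p*g.1 0 0+q*g.1 1 0) (p*g.1 0 1+q*g.1 1 1) (v 0) (v 1)
    set Y := qrow (L*(S/W)) (p*g.1 0 0+q*g.1 1 0) (p*g.1 0 1+q*g.1 1 1) (v 0) (v 1)
    set T := (S/W) * qrow L p q (w 0) (w 1)
    rw [abs_le] at h
    obtain ⟨ha, hb⟩ := h
    constructor
    · calc X ≤ Real.exp (2*δ) * Y := s1
        _ ≤ Real.exp (2*δ) * ((1+2*θ)*T) := by gcongr; nlinarith
        _ = _ := by ring
    · have hY : T ≤ (1+2*θ)*Y := by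
        have : (1-θ)*T ≤ Y := by linarith
        have h3 : (1+2*θ)*((1-θ)*T) ≤ (1+2*θ)*Y := by gcongr
        have h4 : 0 ≤ (θ*(1-2*θ))*T := by
          apply mul_nonneg (mul_nonneg hθ (by linarith)) n1
        nlinarith
      calc T ≤ (1+2*θ)*Y := hY
        _ ≤ (1+2*θ)*(Real.exp (2*δ)*X) := by gcongr
        _ = _ := by ring
  have hmul : ∀ A : SLZ, ∀ i j, (((A * g).1 i j : ℤ) : ℝ) = A.1 i 0 * g.1 0 j + A.1 i 1 * g.1 1 j := by
    intro A i j
    have : (A * g).1 i j = A.1 i 0 * g.1 0 j + A.1 i 1 * g.1 1 j := by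
      rw [Matrix.SpecialLinearGroup.coe_mul, Matrix.mul_apply, Fin.sum_univ_two]
    rw [this]; push_cast; rfl
  apply PP_close L' L v w g 1 _ (S/W) _ (by positivity)
  · intro h
    unfold QQ
    simp only [hmul, mul_one]
    have k1 := (key (h⁻¹.1 0 0) (h⁻¹.1 0 1)).1
    have k2 := (key (h⁻¹.1 1 0) (h⁻¹.1 1 1)).1
    rw [mul_add, mul_add]
    exact add_le_add k1 k2
  · intro h
    unfold QQ
    simp only [hmul, mul_one]
    have k1 := (key (h⁻¹.1 0 0) (h⁻¹.1 0 1)).2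
    have k2 := (key (h⁻¹.1 1 0) (h⁻¹.1 1 1)).2
    rw [mul_add, mul_add]
    exact add_le_add k1 k2
  · nlinarith

lemma AV_equiv (n : ℕ) (v w : Fin 2 → ℝ) (hv : v ≠ 0) (g : SLZ) (N : ℝ)
    (hw0 : w 0 = g.1 0 0 * v 0 + g.1 0 1 * v 1) (hw1 : w 1 = g.1 1 0 * v 0 + g.1 1 1 * v 1)
    (hN : N = (g.1 0 0 : ℝ)^2 + (g.1 0 1 : ℝ)^2 + (g.1 1 0 : ℝ)^2 + (g.1 1 1 : ℝ)^2)
    (hw : w ≠ 0) (hn : 4*N^2 ≤ n+1) :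
    ‖AV n v g - AV n w 1‖ ≤ 2*(Real.log N*(1/(n+1)) + (1/(n+1))^2)
      + 2 * (((1+4*N^2*(1/(n+1)))*Real.exp (2*(1/(n+1))))^8 - 1) := by
  have hS := sq_pos_of_ne hv
  have hW := sq_pos_of_ne hw
  have hdet : (g.1 0 0 : ℝ) * g.1 1 1 - g.1 0 1 * g.1 1 0 = 1 := by exact_mod_cast sl_det g
  have hv0 : v 0 = g.1 1 1 * w 0 + (-g.1 0 1) * w 1 := by
    rw [hw0, hw1]; linear_combination (-v 0)*hdet
  have hv1 : v 1 = (-g.1 1 0) * w 0 + g.1 0 0 * w 1 := by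
    rw [hw0, hw1]; linear_combination (-v 1)*hdet
  have hWN : w 0^2+w 1^2 ≤ N*(v 0^2+v 1^2) := by
    have := cauchy4 (g.1 0 0) (g.1 0 1) (g.1 1 0) (g.1 1 1) (v 0) (v 1)
    rwa [← hN, ← hw0, ← hw1] at this
  have hSN : v 0^2+v 1^2 ≤ N*(w 0^2+w 1^2) := by
    have := cauchy4 (g.1 1 1) (-g.1 0 1) (-g.1 1 0) (g.1 0 0) (w 0) (w 1)
    rw [← hv0, ← hv1] at this
    rw [hN]; linarith
  set S := v 0^2+v 1^2 with hSd
  set W := w 0^2+w 1^2 with hWd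
  have hNp : 0 < N := by
    by_contra hh
    nlinarith
  set m : ℝ := (n:ℝ)+1 with hm
  have hmp : 0 < m := by positivity
  set τ := Real.log (S/W) with hτ
  have hτN : |τ| ≤ Real.log N := by
    rw [abs_le]
    constructor
    · rw [hτ, ← Real.log_inv]
      apply Real.log_le_log (by positivity)
      rw [inv_eq_one_div, div_le_div_iff₀ hNp hW]; linarith
    · apply Real.log_le_log (by positivity)
      rwa [div_le_iff₀ hW]
  set k := ⌊m*τ⌋ with hk
  have hk1 : (k:ℝ) ≤ m*τ := Int.floor_le _
  have hk2 : m*τ < k + 1 := Int.lt_floor_add_one _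
  set ρ := k/m - τ with hρ
  have hρb : |ρ| ≤ 1/m := by
    have e : ρ = (k - m*τ)/m := by rw [hρ]; field_simp
    rw [e, abs_div, abs_of_pos hmp]
    apply div_le_div_of_nonneg_right _ hmp.le
    rw [abs_le]; constructor <;> linarith
  have hkb : |(k:ℝ)| ≤ m*Real.log N + 1 := by
    have h1 := abs_le.1 hτN
    have h2 : m*τ ≤ m*Real.log N := by gcongr; exact h1.2
    have h3 : m*(-Real.log N) ≤ m*τ := by gcongr; exact h1.1
    rw [abs_le]; constructor <;> linarith
  set M : ℕ := (n+1)^2 with hM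
  have hMm : (M:ℝ) = m^2 := by rw [hM, hm]; push_cast; ring
  have hMp : (0:ℝ) < M := by rw [hMm]; positivity
  have hsh := shift_bound (fun j => PP (LL n j) v g) (fun j => (PP_norm _ _ _).le) M M k
  set B := 2 * (((1+4*N^2*(1/m))*Real.exp (2*(1/m)))^8 - 1) with hB
  have hterm : ∀ i ∈ Finset.range M,
      ‖PP (LL n ((M:ℤ) + i + k)) v g - PP (LL n ((M:ℤ) + i)) w 1‖ ≤ B := by
    intro i _
    have hLm : m ≤ LL n ((M:ℤ)+i) := by
      unfold LL
      have h1 : m ≤ (((M:ℤ)+i : ℤ) : ℝ) / ((n:ℝ)+1) := by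
        rw [← hm, le_div_iff₀ hmp]; push_cast; rw [hMm]
        nlinarith [show (0:ℝ) ≤ i by positivity]
      linarith [Real.add_one_le_exp ((((M:ℤ)+i : ℤ) : ℝ) / ((n:ℝ)+1))]
    have hm1 : 1 ≤ m := by rw [hm]; linarith [show (0:ℝ) ≤ n by positivity]
    have h := PP_equiv (LL n ((M:ℤ)+i)) (LL n ((M:ℤ)+i+k)) v w hv g N ρ (1/m) hw0 hw1 hN
      (hm1.trans hLm) hρb hw (hn.trans hLm) (by
        rw [← hSd, ← hWd, ← Real.exp_log (show 0 < S/W by positivity), ← hτ]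
        unfold LL
        rw [← Real.exp_add, ← Real.exp_add, hρ, ← hm]
        congr 1; push_cast; ring)
    refine h.trans ?_
    have h5 : 4*N^2/LL n ((M:ℤ)+i) ≤ 4*N^2*(1/m) := by
      rw [mul_one_div]; gcongr
    have h6 : 0 ≤ 4*N^2/LL n ((M:ℤ)+i) := div_nonneg (by positivity) (by linarith)
    rw [hB]
    gcongr
  have hsum : ‖∑ i ∈ Finset.range M, PP (LL n ((M:ℤ) + i + k)) v g
      - ∑ i ∈ Finset.range M, PP (LL n ((M:ℤ) + i)) w 1‖ ≤ M * B := by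
    rw [← Finset.sum_sub_distrib]
    refine (norm_sum_le_of_le _ hterm).trans ?_
    simp
  rw [norm_sub_rev] at hsh
  have htot := norm_add_le_of_le hsh hsum
  rw [sub_add_sub_cancel] at htot
  unfold AV
  rw [← smul_sub, norm_smul, Real.norm_of_nonneg (by positivity)]
  calc _ ≤ (M:ℝ)⁻¹ * (2*|(k:ℝ)| + M*B) := by gcongr
    _ ≤ (M:ℝ)⁻¹ * (2*(m*Real.log N + 1) + M*B) := by gcongr
    _ = _ := by rw [hMm]; field_simp

lemma exists_bound (N ε : ℝ) (hε : 0 < ε) : ∃ n0 : ℕ, ∀ n ≥ n0, 4*N^2 ≤ (n:ℝ)+1 ∧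
    2*(Real.log N*(1/((n:ℝ)+1)) + (1/((n:ℝ)+1))^2)
      + 2 * (((1+4*N^2*(1/((n:ℝ)+1)))*Real.exp (2*(1/((n:ℝ)+1))))^8 - 1) < ε := by
  have h1 : ∀ᶠ n : ℕ in Filter.atTop, 4*N^2 ≤ (n:ℝ) :=
    tendsto_natCast_atTop_atTop.eventually_ge_atTop _
  have hc : Continuous (fun x : ℝ => 2*(Real.log N*x + x^2)
      + 2 * (((1+4*N^2*x)*Real.exp (2*x))^8 - 1)) := by fun_prop
  have h2 := (hc.tendsto 0).comp (tendsto_one_div_add_atTop_nhds_zero_nat (𝕜 := ℝ))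
  have h3 := h2.eventually_lt_const (show _ < ε by simpa using hε)
  obtain ⟨n0, hn0⟩ := Filter.eventually_atTop.1 (h1.and h3)
  exact ⟨n0, fun n hn => ⟨by linarith [(hn0 n hn).1], (hn0 n hn).2⟩⟩

/-- Amenability of the `SL(2,ℤ)`-action on the real projective line, at the
level of `ℝ² \ {0}`: there is a sequence of maps `μ_n : ℝ² \ {0} → P(SL(2,ℤ))`
into probability densities which are `ℓ¹`-continuous, invariant under scaling
of the vector, and asymptotically equivariant uniformly in the vector. -/
theorem stmt_3 :
    ∃ μ : ℕ → {v : Fin 2 → ℝ // v ≠ 0} → (Matrix.SpecialLinearGroup (Fin 2) ℤ → ℝ),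
      -- (i) each μ_n v is a probability density on SL(2,ℤ)
      (∀ n v, (∀ h, 0 ≤ μ n v h) ∧ Summable (μ n v) ∧ ∑' h, μ n v h = 1) ∧
      -- (ii) each μ_n is continuous into ℓ¹(SL(2,ℤ))
      (∀ n (v₀ : {v : Fin 2 → ℝ // v ≠ 0}),
        Filter.Tendsto (fun v => ∑' h, |μ n v h - μ n v₀ h|) (nhds v₀) (nhds 0)) ∧
      -- (iii) μ_n only depends on the direction of v
      (∀ n (c : ℝ) (_ : c ≠ 0) (v : {v : Fin 2 → ℝ // v ≠ 0})
          (hcv : c • (v : Fin 2 → ℝ) ≠ 0), μ n ⟨c • (v : Fin 2 → ℝ), hcv⟩ = μ n v) ∧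
      -- (iv) asymptotic equivariance, uniformly in v
      (∀ g : Matrix.SpecialLinearGroup (Fin 2) ℤ, ∀ ε > (0 : ℝ), ∃ N : ℕ, ∀ n ≥ N,
        ∀ (v : {v : Fin 2 → ℝ // v ≠ 0})
          (hgv : ((g : Matrix (Fin 2) (Fin 2) ℤ).map (fun z => (z : ℝ))).mulVec
              (v : Fin 2 → ℝ) ≠ 0),
          ∑' h, |μ n ⟨((g : Matrix (Fin 2) (Fin 2) ℤ).map (fun z => (z : ℝ))).mulVec
              (v : Fin 2 → ℝ), hgv⟩ h - μ n v (g⁻¹ * h)| < ε) := by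
  refine ⟨fun n v h => AV n v.1 1 h, ?_, ?_, ?_, ?_⟩
  · intro n v
    exact ⟨AV_nonneg n v.1 1, (AV_hasSum n v.1 1).summable, (AV_hasSum n v.1 1).tsum_eq⟩
  · intro n v₀
    have h := (tendsto_iff_norm_sub_tendsto_zero.1 (AV_cont n v₀.1 v₀.2 1)).comp
      (continuous_subtype_val.tendsto v₀)
    refine h.congr fun v => ?_
    simp only [Function.comp, norm_E1]
    rfl
  · intro n c hc v hcv
    funext h
    exact AV_scale n v.1 1 h c hc
  · intro g ε hε
    obtain ⟨n0, hn0⟩ := exists_bound ((g.1 0 0 : ℝ)^2 + (g.1 0 1 : ℝ)^2 + (g.1 1 0 : ℝ)^2 + (g.1 1 1 : ℝ)^2) ε hε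
    refine ⟨n0, fun n hn v hgv => ?_⟩
    obtain ⟨hn1, hn2⟩ := hn0 n hn
    have h := AV_equiv n v.1 _ v.2 g _ (by simp [Matrix.mulVec, dotProduct, Fin.sum_univ_two])
      (by simp [Matrix.mulVec, dotProduct, Fin.sum_univ_two]) rfl hgv hn1
    refine lt_of_le_of_lt ?_ hn2
    refine le_trans (le_of_eq ?_) h
    rw [norm_sub_rev, norm_E1]
    congr 1; ext x
    simp only [← AV_translate]
    rfl
end

section
/- There exists a map ζ : ℤ² → P(SL(2,ℤ)), where P(SL(2,ℤ)) denotes the set of probability densities on SL(2,ℤ), such that for every g ∈ SL(2,ℤ) and every a ∈ ℤ², the quantity ‖ζ(g·y) − g·ζ(y)‖₁ + ‖ζ(y + a) − ζ(y)‖₁ tends to 0 along the cofinite filter on ℤ². -/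
namespace ZZ
noncomputable section

abbrev SL := Matrix.SpecialLinearGroup (Fin 2) ℤ

/-- The quadratic form attached to a direction and a scale. -/
def Q (y0 y1 K v0 v1 : ℝ) : ℝ :=
  (v0 * y1 - v1 * y0) ^ 2 + K * (v0 ^ 2 + v1 ^ 2) / (y0 ^ 2 + y1 ^ 2)

lemma am (δ x X t : ℝ) (hδ : 0 ≤ δ) (hX : 0 ≤ X) (h : t ^ 2 ≤ 4 * (δ ^ 2 * x ^ 2 * X)) :
    |t| ≤ δ * (x ^ 2 + X) := by
  apply abs_le_of_sq_le_sq
  · have : 4 * (x^2 * X) ≤ (x^2+X)^2 := by nlinarith [sq_nonneg (x^2 - X)]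
    have := mul_le_mul_of_nonneg_left this (sq_nonneg δ)
    nlinarith
  · positivity

lemma cauchy (s t u v : ℝ) : (s * u + t * v) ^ 2 ≤ (s ^ 2 + t ^ 2) * (u ^ 2 + v ^ 2) := by
  nlinarith [sq_nonneg (s * v - t * u)]

lemma Q_equiv (a b c d y0 y1 K v0 v1 δ C : ℝ) (hdet : a * d - b * c = 1)
    (hC : C = a ^ 2 + b ^ 2 + c ^ 2 + d ^ 2)
    (hR : 0 < y0 ^ 2 + y1 ^ 2) (hK : 0 < K) (hδ : 0 ≤ δ)
    (h : C ^ 4 * K ≤ δ ^ 2 * (y0 ^ 2 + y1 ^ 2) ^ 2) :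
    |Q (a * y0 + b * y1) (c * y0 + d * y1) K (a * v0 + b * v1) (c * v0 + d * v1)
      - Q y0 y1 K v0 v1| ≤ δ * Q y0 y1 K v0 v1 := by
  set R := y0 ^ 2 + y1 ^ 2 with hRd
  set R' := (a * y0 + b * y1) ^ 2 + (c * y0 + d * y1) ^ 2 with hR'd
  have hRR' : R ≤ C * R' := by
    have e0 : y0 = d * (a * y0 + b * y1) - b * (c * y0 + d * y1) := by
      linear_combination (-y0) * hdet
    have e1 : y1 = -c * (a * y0 + b * y1) + a * (c * y0 + d * y1) := by
      linear_combination (-y1) * hdet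
    rw [hRd, hR'd, hC]
    generalize (a * y0 + b * y1) = p at *
    generalize (c * y0 + d * y1) = q at *
    rw [e0, e1]
    nlinarith [sq_nonneg (d * q + b * p), sq_nonneg (c * q + a * p)]
  have hC0 : 0 ≤ C := by rw [hC]; positivity
  have hR' : 0 < R' := by
    have : 0 ≤ R' := by positivity
    rcases this.eq_or_lt with h0 | h0
    · rw [← h0] at hRR'; linarith
    · exact h0
  set x := v0 * y1 - v1 * y0 with hx
  set V := v0 ^ 2 + v1 ^ 2 with hV
  have hV0 : 0 ≤ V := by positivity
  set B := (a^2+c^2 - (b^2+d^2)) * (v0*y1+v1*y0) + 2 * (a*b+c*d) * (v1*y1-v0*y0) with hB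
  have hBs : B ^ 2 ≤ C ^ 2 * (V * R) := by
    have h1 := cauchy (a^2+c^2 - (b^2+d^2)) (2 * (a*b+c*d)) (v0*y1+v1*y0) (v1*y1-v0*y0)
    rw [← hB] at h1
    have h2 : (v0*y1+v1*y0)^2 + (v1*y1-v0*y0)^2 = V * R := by rw [hV, hRd]; ring
    have h3 : (a^2+c^2 - (b^2+d^2))^2 + (2 * (a*b+c*d))^2 ≤ C ^ 2 := by
      have : C ^ 2 = (a^2+c^2 - (b^2+d^2))^2 + (2 * (a*b+c*d))^2 + 4 * (a * d - b * c) ^ 2 := by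
        rw [hC]; ring
      rw [this]
      have := sq_nonneg (a * d - b * c)
      linarith
    rw [h2] at h1
    exact h1.trans (mul_le_mul_of_nonneg_right h3 (by positivity))
  have key : Q (a * y0 + b * y1) (c * y0 + d * y1) K (a * v0 + b * v1) (c * v0 + d * v1)
      - Q y0 y1 K v0 v1 = K * (x * B) / (R * R') := by
    unfold Q
    rw [← hRd, ← hR'd]
    have : (a * v0 + b * v1) * (c * y0 + d * y1) - (c * v0 + d * v1) * (a * y0 + b * y1) = x := by
      rw [hx]; linear_combination (v0 * y1 - v1 * y0) * hdet
    rw [this]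
    field_simp
    rw [hB, hx, hRd, hR'd]
    ring
  rw [key]
  have : Q y0 y1 K v0 v1 = x ^ 2 + K * V / R := rfl
  rw [this]
  apply am _ _ _ _ hδ (by positivity)
  have hi : 1 / R' ≤ C / R := by
    rw [div_le_div_iff₀ hR' hR]; linarith
  have hi2 : (1 / R')^2 ≤ (C / R)^2 := by gcongr
  calc (K * (x * B) / (R * R')) ^ 2 = K^2 * x^2 / R^2 * (B^2 * (1 / R')^2) := by
        field_simp
    _ ≤ K^2 * x^2 / R^2 * ((C ^ 2 * (V * R)) * (C / R)^2) := by gcongr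
    _ = (C^4 * K) * (x^2 * K * V / R^3) := by field_simp
    _ ≤ (δ ^ 2 * R ^ 2) * (x^2 * K * V / R^3) := by gcongr
    _ = δ ^ 2 * x ^ 2 * (K * V / R) := by field_simp
    _ ≤ _ := by
      have : 0 ≤ δ ^ 2 * x ^ 2 * (K * V / R) := by positivity
      linarith

lemma Q_trans (a0 a1 y0 y1 K v0 v1 δ : ℝ)
    (hR : 0 < y0 ^ 2 + y1 ^ 2) (hR' : 0 < (y0 + a0) ^ 2 + (y1 + a1) ^ 2)
    (hK : 0 < K) (hδ : 0 ≤ δ) (hδ1 : δ ≤ 1)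
    (h : (a0 ^ 2 + a1 ^ 2) * (y0 ^ 2 + y1 ^ 2) ≤ δ ^ 2 * K)
    (h2 : |(y0 ^ 2 + y1 ^ 2) - ((y0 + a0) ^ 2 + (y1 + a1) ^ 2)|
      ≤ δ * ((y0 + a0) ^ 2 + (y1 + a1) ^ 2)) :
    |Q (y0 + a0) (y1 + a1) K v0 v1 - Q y0 y1 K v0 v1| ≤ (3 * δ) * Q y0 y1 K v0 v1 := by
  have hQ : Q y0 y1 K v0 v1 = (v0 * y1 - v1 * y0) ^ 2 + K * (v0 ^ 2 + v1 ^ 2) / (y0 ^ 2 + y1 ^ 2) := rfl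
  have hQ' : Q (y0 + a0) (y1 + a1) K v0 v1 = ((v0 * y1 - v1 * y0) + (v0 * a1 - v1 * a0)) ^ 2 + K * (v0 ^ 2 + v1 ^ 2) / ((y0 + a0) ^ 2 + (y1 + a1) ^ 2) := by
    unfold Q; ring
  rw [hQ, hQ']
  have he : (v0 * a1 - v1 * a0)^2 ≤ (v0^2+v1^2) * (a0 ^ 2 + a1 ^ 2) := by
    nlinarith [sq_nonneg (v0 * a0 + v1 * a1)]
  generalize (y0 + a0) ^ 2 + (y1 + a1) ^ 2 = R' at *
  generalize y0 ^ 2 + y1 ^ 2 = R at *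
  have hV0 : 0 ≤ v0 ^ 2 + v1 ^ 2 := by positivity
  generalize v0 ^ 2 + v1 ^ 2 = V at *
  generalize a0 ^ 2 + a1 ^ 2 = A at *
  generalize v0 * y1 - v1 * y0 = x at *
  generalize v0 * a1 - v1 * a0 = e at *
  have hX0 : 0 ≤ K * V / R := by positivity
  have hX : e ^ 2 ≤ δ ^ 2 * (K * V / R) := by
    rw [← mul_div_assoc, le_div_iff₀ hR]
    calc e^2 * R ≤ V * A * R := by gcongr
      _ = V * (A * R) := by ring
      _ ≤ V * (δ^2 * K) := by gcongr
      _ = _ := by ring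
  have h3 : |K * V / R' - K * V / R| ≤ δ * (K * V / R) := by
    have : K * V / R' - K * V / R = (K * V / R) * ((R - R') / R') := by field_simp
    rw [this, abs_mul, abs_of_nonneg hX0, mul_comm]
    gcongr
    rw [abs_div, abs_of_pos hR', div_le_iff₀ hR']
    exact h2
  generalize K * V / R = X at *
  generalize K * V / R' = X' at *
  have h4 : |2 * x * e| ≤ δ * (x ^ 2 + X) := by
    apply am _ _ _ _ hδ hX0
    have := mul_le_mul_of_nonneg_left hX (sq_nonneg x)
    nlinarith
  have h5 : e ^ 2 ≤ δ * X := by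
    have : δ ^ 2 * X ≤ δ * X := by
      gcongr; nlinarith
    linarith
  rw [abs_le] at *
  have : 0 ≤ δ * x ^ 2 := by positivity
  constructor <;> nlinarith [sq_nonneg e]

/-- weights lemma -/
lemma inv_pow (q q' δ : ℝ) (hq : 0 < q) (hδ : 0 ≤ δ) (hδ1 : δ ≤ 1 / 2)
    (h : |q' - q| ≤ δ * q) : |(q' ^ 4)⁻¹ - (q ^ 4)⁻¹| ≤ 144 * δ * (q ^ 4)⁻¹ := by
  rw [abs_le] at h
  obtain ⟨x, rfl⟩ : ∃ x, q' = x * q := ⟨q' / q, by field_simp⟩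
  have h1 : 1 - δ ≤ x := by
    by_contra hc; push Not at hc; nlinarith
  have h2 : x ≤ 1 + δ := by
    by_contra hc; push Not at hc; nlinarith
  have hx : 0 < x := by linarith
  have hx4 : 1/16 ≤ x^4 := by
    have : (1/2:ℝ)^4 ≤ x^4 := by gcongr; linarith
    linarith
  have e : ((x * q) ^ 4)⁻¹ - (q ^ 4)⁻¹ = ((1 - x^4) / x^4) * (q ^ 4)⁻¹ := by field_simp
  rw [e, abs_mul, abs_of_pos (a := (q ^ 4)⁻¹) (by positivity)]
  gcongr
  rw [abs_div, abs_of_pos (a := x^4) (by positivity), div_le_iff₀ (by positivity)]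
  have h3 : |1 - x^4| ≤ 9 * δ := by
    have : 1 - x^4 = (1 - x) * ((1 + x) * (1 + x^2)) := by ring
    rw [this, abs_mul, abs_of_pos (a := (1 + x) * (1 + x^2)) (by positivity)]
    have hb : (1 + x) * (1 + x^2) ≤ 9 := by
      have : x ≤ 3/2 := by linarith
      nlinarith [mul_nonneg hx.le hx.le]
    have ha : |1 - x| ≤ δ := by rw [abs_le]; constructor <;> linarith
    nlinarith [abs_nonneg (1-x)]
  nlinarith

/-- entries form -/
def qf (y : Fin 2 → ℤ) (K : ℝ) (γ : SL) : ℝ :=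
  Q (y 0) (y 1) K (γ 0 0) (γ 1 0) + Q (y 0) (y 1) K (γ 0 1) (γ 1 1)

def nr (y : Fin 2 → ℤ) : ℝ := (y 0 : ℝ) ^ 2 + (y 1 : ℝ) ^ 2

def frob (γ : SL) : ℝ := (γ 0 0 : ℝ) ^ 2 + (γ 1 0 : ℝ) ^ 2 + (γ 0 1 : ℝ) ^ 2 + (γ 1 1 : ℝ) ^ 2

lemma det_eq (γ : SL) : γ 0 0 * γ 1 1 - γ 0 1 * γ 1 0 = 1 := by
  have := γ.det_coe
  rwa [Matrix.det_fin_two] at this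

lemma frob_ge (γ : SL) : 1 ≤ frob γ := by
  have h : ((γ 0 0 : ℤ) : ℝ) * γ 1 1 - γ 0 1 * γ 1 0 = 1 := by exact_mod_cast det_eq γ
  unfold frob
  nlinarith [sq_nonneg ((γ 0 0 : ℝ) - γ 1 1), sq_nonneg ((γ 0 1 : ℝ) + γ 1 0)]

lemma qf_ge (y : Fin 2 → ℤ) (K : ℝ) (γ : SL) : K / nr y * frob γ ≤ qf y K γ := by
  have e : qf y K γ = ((γ 0 0 : ℝ) * y 1 - γ 1 0 * y 0)^2 + ((γ 0 1 : ℝ) * y 1 - γ 1 1 * y 0)^2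
      + K / nr y * frob γ := by
    unfold qf Q nr frob; ring
  rw [e]; nlinarith [sq_nonneg ((γ 0 0 : ℝ) * y 1 - γ 1 0 * y 0), sq_nonneg ((γ 0 1 : ℝ) * y 1 - γ 1 1 * y 0)]

lemma qf_pos (y : Fin 2 → ℤ) (K : ℝ) (hK : 0 < K) (hy : 0 < nr y) (γ : SL) : 0 < qf y K γ := by
  refine lt_of_lt_of_le ?_ (qf_ge y K γ)
  have := frob_ge γ
  positivity

lemma summable_frob : Summable (fun γ : SL => (frob γ ^ 4)⁻¹) := by
  have h1 : Summable (fun n : ℤ => (1 + (n:ℝ)^2)⁻¹) := by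
    have h0 : Summable (fun n : ℤ => 1 / (n:ℝ)^2) := Real.summable_one_div_int_pow.mpr (by norm_num)
    refine Summable.of_norm_bounded_eventually h0 ?_
    rw [Filter.eventually_cofinite]
    refine (Set.finite_singleton (0:ℤ)).subset ?_
    intro n hn
    by_contra hne
    apply hn
    have hne' : (n:ℝ) ≠ 0 := by exact_mod_cast hne
    have : 0 < (n:ℝ)^2 := by positivity
    rw [Real.norm_of_nonneg (by positivity), ← one_div]
    apply one_div_le_one_div_of_le this; linarith
  have hn : ∀ n : ℤ, 0 ≤ (1 + (n:ℝ)^2)⁻¹ := fun n => by positivity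
  have h2 := h1.mul_of_nonneg h1 hn hn
  have h4 := h2.mul_of_nonneg h2 (fun _ => mul_nonneg (hn _) (hn _)) (fun _ => mul_nonneg (hn _) (hn _))
  let f : SL → (ℤ × ℤ) × (ℤ × ℤ) := fun γ => ((γ 0 0, γ 1 0), (γ 0 1, γ 1 1))
  have hf : Function.Injective f := by
    intro a b hab
    simp only [f, Prod.mk.injEq] at hab
    ext i j
    fin_cases i <;> fin_cases j <;> simp [hab]
  have h5 := (h4.comp_injective hf).mul_left 16
  refine Summable.of_nonneg_of_le (fun γ => ?_) (fun γ => ?_) h5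
  · positivity
  · have hF := frob_ge γ
    simp only [Function.comp, f]
    have a1 : 1 + (γ 0 0 : ℝ)^2 ≤ 2 * frob γ := by
      unfold frob at *; nlinarith [sq_nonneg (γ 0 0 : ℝ), sq_nonneg (γ 1 0 : ℝ), sq_nonneg (γ 0 1 : ℝ), sq_nonneg (γ 1 1 : ℝ)]
    have a2 : 1 + (γ 1 0 : ℝ)^2 ≤ 2 * frob γ := by
      unfold frob at *; nlinarith [sq_nonneg (γ 0 0 : ℝ), sq_nonneg (γ 1 0 : ℝ), sq_nonneg (γ 0 1 : ℝ), sq_nonneg (γ 1 1 : ℝ)]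
    have a3 : 1 + (γ 0 1 : ℝ)^2 ≤ 2 * frob γ := by
      unfold frob at *; nlinarith [sq_nonneg (γ 0 0 : ℝ), sq_nonneg (γ 1 0 : ℝ), sq_nonneg (γ 0 1 : ℝ), sq_nonneg (γ 1 1 : ℝ)]
    have a4 : 1 + (γ 1 1 : ℝ)^2 ≤ 2 * frob γ := by
      unfold frob at *; nlinarith [sq_nonneg (γ 0 0 : ℝ), sq_nonneg (γ 1 0 : ℝ), sq_nonneg (γ 0 1 : ℝ), sq_nonneg (γ 1 1 : ℝ)]
    rw [← mul_inv, ← mul_inv, ← mul_inv, ← div_eq_mul_inv, ← one_div, div_le_div_iff₀ (by positivity) (by positivity)]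
    calc 1 * ((1 + (γ 0 0 : ℝ)^2) * (1 + (γ 1 0 : ℝ)^2) * ((1 + (γ 0 1 : ℝ)^2) * (1 + (γ 1 1 : ℝ)^2)))
        ≤ 1 * ((2 * frob γ) * (2 * frob γ) * ((2 * frob γ) * (2 * frob γ))) := by gcongr
      _ = 16 * frob γ ^ 4 := by ring

def w (y : Fin 2 → ℤ) (K : ℝ) (γ : SL) : ℝ := (qf y K γ ^ 4)⁻¹

lemma w_pos (y : Fin 2 → ℤ) (K : ℝ) (hK : 0 < K) (hy : 0 < nr y) (γ : SL) : 0 < w y K γ := by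
  have := qf_pos y K hK hy γ
  unfold w; positivity

lemma w_summable (y : Fin 2 → ℤ) (K : ℝ) (hK : 0 < K) (hy : 0 < nr y) : Summable (w y K) := by
  refine Summable.of_nonneg_of_le (fun γ => (w_pos y K hK hy γ).le) (fun γ => ?_)
    (summable_frob.mul_left (((K / nr y)^4)⁻¹))
  rw [← mul_inv, ← mul_pow]
  unfold w
  have := frob_ge γ
  have h2 : 0 < K / nr y * frob γ := by positivity
  gcongr
  exact qf_ge y K γ

def p (y : Fin 2 → ℤ) (K : ℝ) (γ : SL) : ℝ := w y K γ / ∑' h, w y K h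

lemma p_props (y : Fin 2 → ℤ) (K : ℝ) (hK : 0 < K) (hy : 0 < nr y) :
    (∀ h, 0 ≤ p y K h) ∧ HasSum (p y K) 1 := by
  have hs := w_summable y K hK hy
  have hp := hs.tsum_pos (fun h => (w_pos y K hK hy h).le) 1 (w_pos y K hK hy 1)
  refine ⟨fun h => div_nonneg (w_pos y K hK hy h).le hp.le, ?_⟩
  have := hs.hasSum.div_const (∑' h, w y K h)
  rwa [div_self hp.ne'] at this

lemma norm_close {ι : Type*} (f f' : ι → ℝ) (η : ℝ) (hf : ∀ i, 0 < f i) (hf' : ∀ i, 0 < f' i)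
    [Nonempty ι]
    (hs : Summable f) (hs' : Summable f') (h : ∀ i, |f' i - f i| ≤ η * f i) :
    ∑' i, |f' i / (∑' j, f' j) - f i / (∑' j, f j)| ≤ 2 * η := by
  obtain ⟨i0⟩ := ‹Nonempty ι›
  have hp := hs.tsum_pos (fun i => (hf i).le) i0 (hf i0)
  have hp' := hs'.tsum_pos (fun i => (hf' i).le) i0 (hf' i0)
  set W := ∑' j, f j with hW
  set W' := ∑' j, f' j with hW'
  have hd : |W' - W| ≤ η * W := by
    rw [hW, hW', ← hs'.tsum_sub hs, ← tsum_mul_left]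
    refine (norm_tsum_le_tsum_norm (f := fun i => f' i - f i) ((hs'.sub hs).abs)).trans ?_
    exact Summable.tsum_le_tsum h (hs'.sub hs).abs (hs.mul_left η)
  have hb : ∀ i, |f' i / W' - f i / W| ≤ (η / W' ) * f' i + (η / W) * f i := by
    intro i
    have e : f' i / W' - f i / W = f' i * ((W - W') / (W * W')) + (f' i - f i) / W := by
      field_simp; ring
    rw [e]
    refine (abs_add_le _ _).trans ?_
    rw [abs_mul, abs_of_pos (hf' i), abs_div, abs_div, abs_of_pos hp, abs_of_pos (mul_pos hp hp'), abs_sub_comm]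
    refine add_le_add ?_ ?_
    · rw [mul_comm]
      refine mul_le_mul_of_nonneg_right ?_ (hf' i).le
      rw [div_le_div_iff₀ (by positivity) hp']
      nlinarith
    · rw [div_mul_eq_mul_div]
      gcongr
      exact h i
  have hsum := (hs'.mul_left (η / W')).add (hs.mul_left (η / W))
  refine (Summable.tsum_le_tsum hb ?_ hsum).trans ?_
  · exact ((hs'.div_const _).sub (hs.div_const _)).abs
  · rw [Summable.tsum_add (hs'.mul_left (η / W')) (hs.mul_left (η / W)), tsum_mul_left, tsum_mul_left, ← hW, ← hW']
    apply le_of_eq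
    field_simp; ring

lemma p_close (y y' : Fin 2 → ℤ) (K δ : ℝ) (g : SL) (hK : 0 < K) (hy : 0 < nr y) (hy' : 0 < nr y')
    (hδ : 0 ≤ δ) (hδ1 : δ ≤ 1 / 2)
    (h : ∀ γ, |qf y' K γ - qf y K (g⁻¹ * γ)| ≤ δ * qf y K (g⁻¹ * γ)) :
    ∑' γ, |p y' K γ - p y K (g⁻¹ * γ)| ≤ 288 * δ := by
  have e : ∑' γ, w y K γ = ∑' γ, w y K (g⁻¹ * γ) :=
    ((Equiv.mulLeft g⁻¹).tsum_eq (w y K)).symm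
  have hs : Summable (fun γ => w y K (g⁻¹ * γ)) :=
    (Equiv.mulLeft g⁻¹).summable_iff.mpr (w_summable y K hK hy)
  have := norm_close (fun γ => w y K (g⁻¹ * γ)) (w y' K) (144 * δ) (fun γ => w_pos y K hK hy _)
    (fun γ => w_pos y' K hK hy' _) hs (w_summable y' K hK hy')
    (fun γ => inv_pow _ _ δ (qf_pos y K hK hy _) hδ hδ1 (h γ))
  unfold p
  rw [e]
  linarith


/-- logarithmic size -/
def ell (y : Fin 2 → ℤ) : ℕ := Nat.log 16 ((y 0) ^ 2 + (y 1) ^ 2).natAbs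

lemma nr_cast (y : Fin 2 → ℤ) : nr y = ((((y 0) ^ 2 + (y 1) ^ 2).natAbs : ℕ) : ℝ) := by
  have h : 0 ≤ (y 0) ^ 2 + (y 1) ^ 2 := by positivity
  have h2 : ((((y 0) ^ 2 + (y 1) ^ 2).natAbs : ℕ) : ℤ) = (y 0) ^ 2 + (y 1) ^ 2 := Int.natAbs_of_nonneg h
  have h3 : ((((y 0) ^ 2 + (y 1) ^ 2).natAbs : ℕ) : ℝ) = (((y 0) ^ 2 + (y 1) ^ 2 : ℤ) : ℝ) := by
    rw [← h2, Int.cast_natCast, h2]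
  rw [h3]; unfold nr; push_cast; rfl

lemma nr_lt (y : Fin 2 → ℤ) : nr y < 16 ^ (ell y + 1) := by
  rw [nr_cast]
  exact_mod_cast Nat.lt_pow_succ_log_self (by norm_num) _

lemma ell_le_nr (y : Fin 2 → ℤ) (hy : 0 < nr y) : (16:ℝ) ^ (ell y) ≤ nr y := by
  rw [nr_cast] at *
  have : (((y 0) ^ 2 + (y 1) ^ 2).natAbs : ℕ) ≠ 0 := by
    intro h; rw [h] at hy; simp at hy
  exact_mod_cast Nat.pow_log_le_self 16 this

lemma nr_pos_of_ell (y : Fin 2 → ℤ) (h : ell y ≠ 0) : 0 < nr y := by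
  rw [nr_cast]
  rcases Nat.eq_zero_or_pos (((y 0) ^ 2 + (y 1) ^ 2).natAbs) with h0 | h0
  · exfalso; apply h; unfold ell; rw [h0]; simp
  · exact_mod_cast h0

lemma le_ell (y : Fin 2 → ℤ) (L : ℕ) (h : (16:ℝ) ^ L ≤ nr y) : L ≤ ell y := by
  by_contra hc
  push Not at hc
  have := nr_lt y
  have h2 : (16:ℝ) ^ (ell y + 1) ≤ 16 ^ L := pow_le_pow_right₀ (by norm_num) hc
  linarith

lemma ell_le (y y' : Fin 2 → ℤ) (D : ℕ) (hy' : 0 < nr y') (h : nr y' ≤ 16 ^ D * nr y) :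
    ell y' ≤ ell y + D := by
  by_contra hc
  push Not at hc
  have h1 := ell_le_nr y' hy'
  have h2 := nr_lt y
  have h3 : (16:ℝ) ^ (ell y + D + 1) ≤ 16 ^ (ell y') := pow_le_pow_right₀ (by norm_num) hc
  have h4 : (16:ℝ) ^ D * nr y < 16 ^ D * 16 ^ (ell y + 1) := by gcongr
  have h5 : (16:ℝ) ^ (ell y + D + 1) = 16 ^ D * 16 ^ (ell y + 1) := by ring
  linarith

lemma nr_tendsto : Filter.Tendsto nr Filter.cofinite Filter.atTop := by
  rw [Filter.tendsto_atTop]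
  intro X
  rw [Filter.eventually_cofinite]
  obtain ⟨n, hn⟩ := exists_nat_ge X
  refine (Set.finite_Icc (fun _ => -(n:ℤ) : Fin 2 → ℤ) (fun _ => (n:ℤ))).subset ?_
  intro y hy
  simp only [Set.mem_ofPred_eq, not_le] at hy
  have hlt : nr y < n := lt_of_lt_of_le hy hn
  have key : ∀ i, |y i| ≤ n := by
    intro i
    have h1 : ((y i : ℤ) : ℝ) ^ 2 ≤ nr y := by
      unfold nr
      fin_cases i
      · simp only [Fin.zero_eta, Fin.mk_one]; nlinarith [sq_nonneg (y 1 : ℝ)]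
      · simp only [Fin.zero_eta, Fin.mk_one]; nlinarith [sq_nonneg (y 0 : ℝ)]
    have h2 : (y i) ^ 2 ≤ (n : ℤ) := by
      have : ((y i : ℤ) : ℝ) ^ 2 ≤ n := by linarith
      exact_mod_cast this
    have h3 : |y i| ≤ (y i) ^ 2 := by
      rw [← sq_abs]
      rcases (abs_nonneg (y i)).eq_or_lt with h | h
      · rw [← h]; norm_num
      · nlinarith
    exact h3.trans h2
  exact ⟨fun i => (abs_le.mp (key i)).1, fun i => (abs_le.mp (key i)).2⟩

lemma ell_tendsto : Filter.Tendsto ell Filter.cofinite Filter.atTop := by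
  rw [Filter.tendsto_atTop]
  intro L
  filter_upwards [Filter.tendsto_atTop.mp nr_tendsto ((16:ℝ) ^ L)] with y hy
  exact le_ell y L hy

/-- window -/
def win (l : ℕ) : Finset ℕ := Finset.Ico (5 * l) (7 * l)

lemma win_card (l : ℕ) : ((win l).card : ℝ) = 2 * l := by
  have : (win l).card = 2 * l := by unfold win; rw [Nat.card_Ico]; omega
  rw [this]; push_cast; ring

def ind (A : Finset ℕ) (k : ℕ) : ℝ := if k ∈ A then 1 else 0

def wt (l k : ℕ) : ℝ := ind (win l) k / (2 * l)

lemma sum_ind (A S : Finset ℕ) (h : A ⊆ S) : ∑ k ∈ S, ind A k = A.card := by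
  unfold ind
  rw [Finset.sum_ite_mem, Finset.inter_eq_right.mpr h]; simp

lemma wt_diff (l l' D : ℕ) (hl : 0 < l) (hl' : 0 < l') (h1 : l ≤ l' + D) (h2 : l' ≤ l + D) :
    ∑ k ∈ win l ∪ win l', |wt l' k - wt l k| ≤ 12 * D / l := by
  set A := win l with hA
  set B := win l' with hB
  have hlr : (0:ℝ) < l := by exact_mod_cast hl
  have hlr' : (0:ℝ) < l' := by exact_mod_cast hl'
  set S := Finset.Ico (5 * min l l') (5 * max l l') ∪ Finset.Ico (7 * min l l') (7 * max l l') with hS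
  have hSc : (S.card : ℝ) ≤ 12 * D := by
    have : S.card ≤ 12 * D := by
      refine (Finset.card_union_le _ _).trans ?_
      rw [Nat.card_Ico, Nat.card_Ico]; omega
    exact_mod_cast this
  have hT : ∑ k ∈ A ∪ B, |ind B k - ind A k| ≤ 12 * D := by
    refine le_trans ?_ hSc
    have : ∀ k ∈ A ∪ B, |ind B k - ind A k| ≤ ind S k := by
      intro k _
      unfold ind
      by_cases ha : k ∈ A <;> by_cases hb : k ∈ B
      · simp only [ha, hb, if_true]; split_ifs <;> simp
      · have : k ∈ S := by
          simp only [hA, hB, hS, win, Finset.mem_union, Finset.mem_Ico] at *; omega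
        simp [ha, hb, this]
      · have : k ∈ S := by
          simp only [hA, hB, hS, win, Finset.mem_union, Finset.mem_Ico] at *; omega
        simp [ha, hb, this]
      · simp only [ha, hb, if_false]; split_ifs <;> simp
    refine (Finset.sum_le_sum this).trans ?_
    rw [← sum_ind S ((A ∪ B) ∪ S) Finset.subset_union_right]
    refine Finset.sum_le_sum_of_subset_of_nonneg Finset.subset_union_left ?_
    intro k _ _; unfold ind; split_ifs <;> simp
  have hcard : |(2 * l' : ℝ) - 2 * l| ≤ 12 * D := by
    refine le_trans ?_ hT
    rw [← win_card, ← win_card, ← sum_ind (win l') (A ∪ B) Finset.subset_union_right,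
      ← sum_ind (win l) (A ∪ B) Finset.subset_union_left, ← Finset.sum_sub_distrib]
    exact Finset.abs_sum_le_sum_abs _ _
  have hb : ∀ k ∈ A ∪ B, |wt l' k - wt l k| ≤
      |ind B k - ind A k| / (2 * l) + ind B k * (12 * D / (2 * l * (2 * l'))) := by
    intro k _
    have e : wt l' k - wt l k = (ind B k - ind A k) / (2 * l)
        + ind B k * (-(2 * l' - 2 * l) / (2 * l * (2 * l'))) := by
      unfold wt; rw [← hA, ← hB]; field_simp; ring
    rw [e]
    refine (abs_add_le _ _).trans ?_
    have hi : 0 ≤ ind B k := by unfold ind; split_ifs <;> simp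
    rw [abs_div, abs_of_pos (a := (2 * l : ℝ)) (by positivity),
      abs_mul (ind B k), abs_div, abs_of_nonneg hi, abs_neg,
      abs_of_pos (a := (2 * l * (2 * l') : ℝ)) (by positivity)]
    gcongr
  refine (Finset.sum_le_sum hb).trans ?_
  rw [Finset.sum_add_distrib, ← Finset.sum_div, ← Finset.sum_mul,
    sum_ind B (A ∪ B) Finset.subset_union_right, hB, win_card]
  have : (∑ k ∈ A ∪ B, |ind B k - ind A k|) / (2 * l) ≤ 12 * D / (2 * l) := by gcongr
  refine (add_le_add_left this _).trans ?_
  apply le_of_eq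
  field_simp
  ring

def zeta (y : Fin 2 → ℤ) (h : SL) : ℝ :=
  if ell y = 0 then (if h = 1 then 1 else 0)
  else ∑ k ∈ win (ell y), wt (ell y) k * p y (2 ^ k) h

lemma wt_nonneg (l k : ℕ) : 0 ≤ wt l k := by
  unfold wt ind; split_ifs <;> positivity

lemma wt_sum (l : ℕ) (hl : l ≠ 0) : ∑ k ∈ win l, wt l k = 1 := by
  unfold wt
  rw [← Finset.sum_div, sum_ind _ _ (Finset.Subset.refl _), win_card]
  have : (l:ℝ) ≠ 0 := by exact_mod_cast hl
  field_simp

lemma zeta_props (y : Fin 2 → ℤ) : (∀ h, 0 ≤ zeta y h) ∧ HasSum (zeta y) 1 := by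
  by_cases h0 : ell y = 0
  · have e : zeta y = fun h => if h = 1 then 1 else 0 := by
      funext h; simp [zeta, h0]
    rw [e]
    exact ⟨fun h => by dsimp only; split_ifs <;> simp, hasSum_ite_eq 1 1⟩
  · have hy := nr_pos_of_ell y h0
    have e : zeta y = fun h => ∑ k ∈ win (ell y), wt (ell y) k * p y (2 ^ k) h := by
      funext h; simp [zeta, h0]
    have hp := fun k : ℕ => p_props y (2 ^ k) (by positivity) hy
    rw [e]
    refine ⟨fun h => Finset.sum_nonneg (fun k _ => mul_nonneg (wt_nonneg _ _) ((hp k).1 h)), ?_⟩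
    have := hasSum_sum (s := win (ell y)) (fun k _ => ((hp k).2.mul_left (wt (ell y) k)))
    simp only [mul_one] at this
    rwa [wt_sum _ h0] at this

lemma zeta_eq (y : Fin 2 → ℤ) (h0 : ell y ≠ 0) (S : Finset ℕ) (hS : win (ell y) ⊆ S) (h : SL) :
    zeta y h = ∑ k ∈ S, wt (ell y) k * p y (2 ^ k) h := by
  unfold zeta
  rw [if_neg h0]
  apply Finset.sum_subset hS
  intro k _ hk
  simp [wt, ind, hk]

lemma core (y y' : Fin 2 → ℤ) (g : SL) (δ : ℝ) (D : ℕ) (hδ : 0 ≤ δ) (hδ1 : δ ≤ 1 / 2)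
    (h0 : ell y ≠ 0) (h0' : ell y' ≠ 0) (h1 : ell y ≤ ell y' + D) (h2 : ell y' ≤ ell y + D)
    (h : ∀ k ∈ win (ell y), ∀ γ,
      |qf y' (2 ^ k) γ - qf y (2 ^ k) (g⁻¹ * γ)| ≤ δ * qf y (2 ^ k) (g⁻¹ * γ)) :
    ∑' γ, |zeta y' γ - zeta y (g⁻¹ * γ)| ≤ 12 * D / ell y + 288 * δ := by
  have hy := nr_pos_of_ell y h0
  have hy' := nr_pos_of_ell y' h0'
  set l := ell y with hl
  set l' := ell y' with hl'
  have hp := fun k : ℕ => p_props y (2 ^ k) (by positivity) hy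
  have hp' := fun k : ℕ => p_props y' (2 ^ k) (by positivity) hy'
  have hsg : ∀ k : ℕ, Summable (fun γ => p y (2 ^ k) (g⁻¹ * γ)) := fun k =>
    (Equiv.mulLeft g⁻¹).summable_iff.mpr (hp k).2.summable
  have hd : ∀ k : ℕ, Summable (fun γ => |p y' (2 ^ k) γ - p y (2 ^ k) (g⁻¹ * γ)|) := fun k =>
    ((hp' k).2.summable.sub (hsg k)).abs
  set S := win l ∪ win l' with hS
  have hb : ∀ γ, |zeta y' γ - zeta y (g⁻¹ * γ)| ≤
      (∑ k ∈ S, |wt l' k - wt l k| * p y' (2 ^ k) γ) +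
      ∑ k ∈ win l, wt l k * |p y' (2 ^ k) γ - p y (2 ^ k) (g⁻¹ * γ)| := by
    intro γ
    have e : zeta y' γ - zeta y (g⁻¹ * γ) = (∑ k ∈ S, (wt l' k - wt l k) * p y' (2 ^ k) γ) +
        ∑ k ∈ win l, wt l k * (p y' (2 ^ k) γ - p y (2 ^ k) (g⁻¹ * γ)) := by
      have e2 : ∑ k ∈ win l, wt l k * (p y' (2 ^ k) γ - p y (2 ^ k) (g⁻¹ * γ)) =
          ∑ k ∈ S, wt l k * (p y' (2 ^ k) γ - p y (2 ^ k) (g⁻¹ * γ)) := by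
        apply Finset.sum_subset Finset.subset_union_left
        intro k _ hk
        simp [wt, ind, hk]
      rw [e2, zeta_eq y' h0' S Finset.subset_union_right, zeta_eq y h0 S Finset.subset_union_left,
        ← Finset.sum_add_distrib, ← Finset.sum_sub_distrib]
      apply Finset.sum_congr rfl
      intro k _
      rw [← hl, ← hl']
      ring
    rw [e]
    refine (abs_add_le _ _).trans (add_le_add ?_ ?_)
    · refine (Finset.abs_sum_le_sum_abs _ _).trans (Finset.sum_le_sum fun k _ => ?_)
      rw [abs_mul, abs_of_nonneg ((hp' k).1 γ)]
    · refine (Finset.abs_sum_le_sum_abs _ _).trans (Finset.sum_le_sum fun k _ => ?_)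
      rw [abs_mul, abs_of_nonneg (wt_nonneg l k)]
  have s1 := hasSum_sum (s := S) (fun k _ => ((hp' k).2.mul_left |wt l' k - wt l k|))
  have s2 := hasSum_sum (s := win l) (fun k _ => ((hd k).hasSum.mul_left (wt l k)))
  have s3 := s1.add s2
  have hz : Summable (fun γ => |zeta y' γ - zeta y (g⁻¹ * γ)|) :=
    Summable.of_nonneg_of_le (fun _ => abs_nonneg _) hb s3.summable
  refine (hz.tsum_le_tsum hb s3.summable).trans ?_
  rw [s3.tsum_eq]
  refine add_le_add ?_ ?_
  · simp only [mul_one]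
    exact wt_diff l l' D (Nat.pos_of_ne_zero h0) (Nat.pos_of_ne_zero h0') h1 h2
  · have : ∀ k ∈ win l, wt l k * ∑' γ, |p y' (2 ^ k) γ - p y (2 ^ k) (g⁻¹ * γ)| ≤
        wt l k * (288 * δ) := by
      intro k hk
      exact mul_le_mul_of_nonneg_left
        (p_close y y' (2 ^ k) δ g (by positivity) hy hy' hδ hδ1 (h k hk)) (wt_nonneg l k)
    refine (Finset.sum_le_sum this).trans ?_
    rw [← Finset.sum_mul, wt_sum l h0, one_mul]

lemma win_bounds (y : Fin 2 → ℤ) (h0 : ell y ≠ 0) (k : ℕ) (hk : k ∈ win (ell y)) :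
    (2:ℝ) ^ k * 2 ^ (ell y) ≤ nr y ^ 2 ∧ nr y * 2 ^ (ell y) ≤ 16 * 2 ^ k := by
  have h1 := ell_le_nr y (nr_pos_of_ell y h0)
  have h2 := nr_lt y
  simp only [win, Finset.mem_Ico] at hk
  generalize ell y = l at *
  have e : (16:ℝ) ^ l = 2 ^ (4 * l) := by rw [pow_mul]; norm_num
  constructor
  · calc (2:ℝ) ^ k * 2 ^ l = 2 ^ (k + l) := by rw [pow_add]
      _ ≤ 2 ^ (4 * l * 2) := pow_le_pow_right₀ (by norm_num) (by omega)
      _ = (16 ^ l) ^ 2 := by rw [e, ← pow_mul]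
      _ ≤ _ := by gcongr
  · calc nr y * 2 ^ l ≤ 16 ^ (l + 1) * 2 ^ l := by gcongr
      _ = 16 * 2 ^ (5 * l) := by rw [pow_succ, e, show 5 * l = 4 * l + l by ring, pow_add]; ring
      _ ≤ _ := by gcongr; norm_num; omega

lemma ev_pow (X δ : ℝ) (hδ : 0 < δ) :
    ∀ᶠ y in Filter.cofinite, X ≤ δ * (2:ℝ) ^ (ell y) := by
  have h : Filter.Tendsto (fun y => δ * (2:ℝ) ^ (ell y)) Filter.cofinite Filter.atTop :=
    ((tendsto_pow_atTop_atTop_of_one_lt (by norm_num : (1:ℝ) < 2)).comp ell_tendsto).const_mul_atTop hδ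
  exact Filter.tendsto_atTop.mp h X

lemma ev_div (D : ℕ) (ε : ℝ) (hε : 0 < ε) :
    ∀ᶠ y in Filter.cofinite, 12 * (D : ℝ) / ell y ≤ ε := by
  have h : Filter.Tendsto (fun y => 12 * (D : ℝ) / ell y) Filter.cofinite (nhds 0) :=
    (tendsto_const_div_atTop_nhds_zero_nat (12 * (D:ℝ))).comp ell_tendsto
  filter_upwards [h.eventually_lt_const hε] with y hy using hy.le

lemma equiv_ev (g : SL) (ε : ℝ) (hε : 0 < ε) : ∀ᶠ y in Filter.cofinite,
    ∑' h, |zeta ((g : Matrix (Fin 2) (Fin 2) ℤ).mulVec y) h - zeta y (g⁻¹ * h)| ≤ ε := by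
  obtain ⟨D, hD⟩ : ∃ D : ℕ, frob g ≤ 16 ^ D := (pow_unbounded_of_one_lt (frob g) (by norm_num)).imp
    fun _ h => h.le
  set δ := min (1/2) (ε / 576) with hδ
  have hδ0 : 0 < δ := by positivity
  have hδ1 : δ ≤ 1/2 := min_le_left _ _
  have hδ2 : δ ≤ ε / 576 := min_le_right _ _
  filter_upwards [ev_pow (frob g ^ 4) (δ ^ 2) (by positivity), ev_div D (ε/2) (by positivity),
    Filter.tendsto_atTop.mp ell_tendsto (D + 1)] with y hy1 hy2 hy3
  set y' := (g : Matrix (Fin 2) (Fin 2) ℤ).mulVec y with hy'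
  have h0 : ell y ≠ 0 := by omega
  have hpos := nr_pos_of_ell y h0
  have hdet : ((g 0 0 : ℤ) : ℝ) * g 1 1 - g 0 1 * g 1 0 = 1 := by exact_mod_cast det_eq g
  have c0 : ((y' 0 : ℤ) : ℝ) = g 0 0 * y 0 + g 0 1 * y 1 := by
    rw [hy']; simp [Matrix.mulVec, dotProduct, Fin.sum_univ_two]
  have c1 : ((y' 1 : ℤ) : ℝ) = g 1 0 * y 0 + g 1 1 * y 1 := by
    rw [hy']; simp [Matrix.mulVec, dotProduct, Fin.sum_univ_two]
  have n1 : nr y' ≤ frob g * nr y := by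
    unfold nr frob; rw [c0, c1]
    have t1 := cauchy (g 0 0) (g 0 1) (y 0) (y 1)
    have t2 := cauchy (g 1 0) (g 1 1) (y 0) (y 1)
    linarith
  have n2 : nr y ≤ frob g * nr y' := by
    have e0 : (y 0 : ℝ) = g 1 1 * y' 0 + (- g 0 1) * y' 1 := by
      rw [c0, c1]; linear_combination (-(y 0 : ℝ)) * hdet
    have e1 : (y 1 : ℝ) = (- g 1 0) * y' 0 + g 0 0 * y' 1 := by
      rw [c0, c1]; linear_combination (-(y 1 : ℝ)) * hdet
    unfold nr frob; rw [e0, e1]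
    have t1 := cauchy (g 1 1) (-g 0 1) (y' 0) (y' 1)
    have t2 := cauchy (-g 1 0) (g 0 0) (y' 0) (y' 1)
    linarith
  have hF := frob_ge g
  have hpos' : 0 < nr y' := by
    by_contra hc
    push Not at hc
    nlinarith
  have l1 : ell y ≤ ell y' + D := ell_le y' y D hpos (n2.trans (by gcongr))
  have l2 : ell y' ≤ ell y + D := ell_le y y' D hpos' (n1.trans (by gcongr))
  have hfin := core y y' g δ D hδ0.le hδ1 h0 (by omega) l1 l2 ?_
  · linarith
  · intro k hk γ
    obtain ⟨b1, -⟩ := win_bounds y h0 k hk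
    have hcond : frob g ^ 4 * 2 ^ k ≤ δ ^ 2 * nr y ^ 2 := by
      calc frob g ^ 4 * 2 ^ k ≤ δ ^ 2 * 2 ^ (ell y) * 2 ^ k := by gcongr
        _ = δ ^ 2 * (2 ^ k * 2 ^ (ell y)) := by ring
        _ ≤ _ := by gcongr
    obtain ⟨γ', rfl⟩ : ∃ γ', γ = g * γ' := ⟨g⁻¹ * γ, by group⟩
    rw [inv_mul_cancel_left]
    have m : ∀ i j, (((g * γ') i j : ℤ) : ℝ) = g i 0 * γ' 0 j + g i 1 * γ' 1 j := by
      intro i j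
      simp [Matrix.mul_apply, Fin.sum_univ_two]
    have hCf : frob g = (g 0 0 : ℝ)^2 + (g 0 1 : ℝ)^2 + (g 1 0 : ℝ)^2 + (g 1 1 : ℝ)^2 := by
      unfold frob; ring
    have q := fun v0 v1 => Q_equiv (g 0 0) (g 0 1) (g 1 0) (g 1 1) (y 0) (y 1) (2 ^ k) v0 v1 δ (frob g)
      hdet hCf hpos (by positivity) hδ0.le hcond
    unfold qf
    rw [c0, c1, m, m, m, m]
    have q1 := q (γ' 0 0) (γ' 1 0)
    have q2 := q (γ' 0 1) (γ' 1 1)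
    rw [abs_le] at *
    constructor <;> linarith

lemma trans_ev (a : Fin 2 → ℤ) (ε : ℝ) (hε : 0 < ε) : ∀ᶠ y in Filter.cofinite,
    ∑' h, |zeta (y + a) h - zeta y h| ≤ ε := by
  set δ := min (1/6) (ε / 1728) with hδ
  have hδ0 : 0 < δ := by positivity
  have hδ1 : δ ≤ 1/6 := min_le_left _ _
  have hδ2 : δ ≤ ε / 1728 := min_le_right _ _
  filter_upwards [ev_pow (16 * nr a) (δ ^ 2) (by positivity), ev_div 1 (ε/2) (by positivity),
    Filter.tendsto_atTop.mp ell_tendsto 2,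
    Filter.tendsto_atTop.mp nr_tendsto (nr a * (4 / δ + 1) / (δ / 4))] with y hy1 hy2 hy3 hy4
  set y' := y + a with hy'
  have h0 : ell y ≠ 0 := by omega
  have hpos := nr_pos_of_ell y h0
  have c0 : ((y' 0 : ℤ) : ℝ) = y 0 + a 0 := by rw [hy']; simp
  have c1 : ((y' 1 : ℤ) : ℝ) = y 1 + a 1 := by rw [hy']; simp
  rw [div_le_iff₀ (by positivity)] at hy4
  have hna : 0 ≤ nr a := by unfold nr; positivity
  have hdiff : |nr y' - nr y| ≤ δ / 2 * nr y := by
    have e : nr y' - nr y = 2 * (y 0 * a 0 + y 1 * a 1) + nr a := by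
      unfold nr; rw [c0, c1]; ring
    have h1 : |2 * ((y 0 : ℝ) * a 0 + y 1 * a 1)| ≤ δ / 4 * nr y + nr a * (4 / δ) := by
      have e1 : δ / 4 * nr y + nr a * (4 / δ) - 2 * ((y 0 : ℝ) * a 0 + y 1 * a 1) =
          4 / δ * ((δ / 4 * y 0 - a 0) ^ 2 + (δ / 4 * y 1 - a 1) ^ 2) := by
        unfold nr; field_simp; ring
      have e2 : δ / 4 * nr y + nr a * (4 / δ) + 2 * ((y 0 : ℝ) * a 0 + y 1 * a 1) =
          4 / δ * ((δ / 4 * y 0 + a 0) ^ 2 + (δ / 4 * y 1 + a 1) ^ 2) := by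
        unfold nr; field_simp; ring
      have p1 : 0 ≤ 4 / δ * ((δ / 4 * y 0 - a 0) ^ 2 + (δ / 4 * y 1 - a 1) ^ 2) := by positivity
      have p2 : 0 ≤ 4 / δ * ((δ / 4 * y 0 + a 0) ^ 2 + (δ / 4 * y 1 + a 1) ^ 2) := by positivity
      rw [abs_le]
      constructor <;> linarith
    rw [e]
    refine (abs_add_le _ _).trans ?_
    rw [abs_of_nonneg hna]
    linarith
  have hd := abs_le.mp hdiff
  have hlow : nr y ≤ 2 * nr y' := by nlinarith
  have hup : nr y' ≤ 2 * nr y := by nlinarith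
  have hpos' : 0 < nr y' := by linarith
  have l1 : ell y ≤ ell y' + 1 := ell_le y' y 1 hpos (by linarith)
  have l2 : ell y' ≤ ell y + 1 := ell_le y y' 1 hpos' (by linarith)
  have hfin := core y y' 1 (3 * δ) 1 (by positivity) (by linarith) h0 (by omega) l1 l2 ?_
  · simp only [inv_one, one_mul] at hfin
    linarith
  · intro k hk γ
    obtain ⟨-, b2⟩ := win_bounds y h0 k hk
    have hcond : nr a * nr y ≤ δ ^ 2 * 2 ^ k := by
      have h2 : (16 * nr a) * nr y ≤ (δ ^ 2 * 2 ^ (ell y)) * nr y := by gcongr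
      have h3 : δ ^ 2 * (nr y * 2 ^ (ell y)) ≤ δ ^ 2 * (16 * 2 ^ k) := by gcongr
      linarith
    have e' : nr y' = ((y 0 : ℝ) + a 0) ^ 2 + (y 1 + a 1) ^ 2 := by
      unfold nr; rw [c0, c1]
    have h2 : |nr y - nr y'| ≤ δ * nr y' := by
      rw [abs_sub_comm]
      refine hdiff.trans ?_
      nlinarith
    have hp2 := hpos'
    rw [e'] at h2 hp2
    have q := fun v0 v1 => Q_trans (a 0) (a 1) (y 0) (y 1) (2 ^ k) v0 v1 δ hpos hp2
      (by positivity) hδ0.le (by linarith) hcond h2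
    rw [inv_one, one_mul]
    unfold qf
    rw [c0, c1]
    have q1 := q (γ 0 0) (γ 1 0)
    have q2 := q (γ 0 1) (γ 1 1)
    rw [abs_le] at *
    constructor <;> linarith

end
end ZZ

/-- There is a map `ζ : ℤ² → P(SL(2,ℤ))` into probability densities such that
for every `g ∈ SL(2,ℤ)` and every `a ∈ ℤ²`,
`‖ζ(g·y) − g·ζ(y)‖₁ + ‖ζ(y + a) − ζ(y)‖₁ → 0` along the cofinite filter on ℤ². -/
theorem stmt_6 :
    ∃ ζ : (Fin 2 → ℤ) → (Matrix.SpecialLinearGroup (Fin 2) ℤ → ℝ),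
      (∀ y, (∀ h, 0 ≤ ζ y h) ∧ Summable (ζ y) ∧ ∑' h, ζ y h = 1) ∧
      (∀ (g : Matrix.SpecialLinearGroup (Fin 2) ℤ) (a : Fin 2 → ℤ),
        Filter.Tendsto
          (fun y => (∑' h, |ζ ((g : Matrix (Fin 2) (Fin 2) ℤ).mulVec y) h -
                            ζ y (g⁻¹ * h)|) +
                    (∑' h, |ζ (y + a) h - ζ y h|))
          Filter.cofinite (nhds 0)) := by
  refine ⟨ZZ.zeta, fun y => ⟨(ZZ.zeta_props y).1, (ZZ.zeta_props y).2.summable,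
    (ZZ.zeta_props y).2.tsum_eq⟩, ?_⟩
  intro g a
  rw [Metric.tendsto_nhds]
  intro ε hε
  filter_upwards [ZZ.equiv_ev g (ε / 3) (by positivity), ZZ.trans_ev a (ε / 3) (by positivity)]
    with y h1 h2
  rw [Real.dist_eq, sub_zero, abs_of_nonneg (add_nonneg (tsum_nonneg fun _ => abs_nonneg _)
    (tsum_nonneg fun _ => abs_nonneg _))]
  linarith
end
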